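/- Let $G$ be a compact connected Lie group and let $\mathcal L\to\mathcal X\xrightarrow{\pi}\mathbb C$ be a $G$-invariant smooth test configuration with connected fibres of complex dimension $n$: $\mathcal X$ is a complex manifold of dimension $n+1$, $\pi$ is a proper holomorphic submersion, $\mathcal L$ is a holomorphic line bundle on $\mathcal X$, $\mathbb C^*$ acts holomorphically on $(\mathcal X,\mathcal L)$ by an action $\rho$ covering multiplication on $\mathbb C$, and $G$ acts smoothly on $(\mathcal X,\mathcal L)$ by holomorphic maps, covering the identity of $\mathbb C$ and commuting with $\rho$ (the actions on $\mathcal L$ being linear on the fibres). Write $\mathcal X_z=\pi^{-1}(z)$, $\mathcal L_z=\mathcal L|_{\mathcal X_z}$. Let $\Omega$ be an $S^1$-invariant and $G$-invariant Kähler form on $\mathcal X$ such that $\Omega|_{\mathcal X_z}\in c_1(\mathcal L_z)$ for every $z$ (that is, $\Omega|_{\mathcal X_z}=-i\partial\bar\partial\log h$ for a smooth hermitian metric $h$ on $\mathcal L_z$; in particular $\mathcal L_z$ is ample), such that the $S^1$-action generated by $W$ is hamiltonian, $i_W\Omega=dH$ for a smooth function $H$ on $\mathcal X$, and such that $G$ acts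 on each $(\mathcal X_z,\Omega|_{\mathcal X_z})$ by hamiltonian diffeomorphisms. Let $F:M\times\mathbb C\to\mathcal X$ be a diffeomorphism with $\pi(F(x,z))=z$ and $F(\sigma x,z)=\sigma F(x,z)$ for a $G$-action on $M$ and all $\sigma\in G$, where $M=(M,J_0)$ is a complex manifold such that $F_0=F(\cdot,0)$ is a biholomorphism onto $\mathcal X_0$. For a $G$-invariant Kähler form $\omega$ on a compact complex manifold of dimension $n$ with a holomorphic action of $G$, let $S(\omega)$ be the scalar curvature (the trace with respect to $\omega$ of the Ricci form), $\underline S$ its average with respect to the volume $\omega^n/n!$, and $S^G(\omega)=S(\omega)-\underline S-\Pi^G_\omega S(\omega)$ the reduced scalar curvature, where $\Pi^G_\omega$ is the $L^2(\omega^n/n!)$-orthogonal projection onto the space of smooth functions of mean value zero whose hamiltonian vector field belongs to $\mathrm{Lie}(G)$. The modified Calabi functional is $Ca^G(\varphi)=\frac1{n!}\int S^G(\omega_\varphi)^2\,\omega_\varphi^n$, where $\omega_\varphi=\omega+i\partial\bar\partial\varphi$ is Kähler and $G$-invariant. Assume that the metric on the central fibre is extremal with $S^G(\Omega|_{\mathcal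 X_0})=0$, that is, $S^G(F_0^*\Omega)=0$. Let $\omega_t=\rho_{e^{-t}}^*\Omega$, $t\in\mathbb R$, be the resulting family of Kähler forms on the generic fibre $\mathcal X_1$, and let $\varphi_t$ be smooth potentials of them, $\omega_t=\omega_0+i\partial\bar\partial\varphi_t$. Then $Ca^G(\varphi_t)=\frac1{n!}\int_{\mathcal X_1}S^G(\omega_t)^2\,\omega_t^n$ (a convergent integral for every $t$) converges exponentially fast, as $t\to\infty$, to $\frac1{n!}\int_M S^G(F_0^*\Omega)^2\,(F_0^*\Omega)^n$, and this limit is zero: there are $C$ and $c>0$ such that for all $t\ge 0$ $$\Bigl|Ca^G(\varphi_t)-\tfrac1{n!}\int_M S^G(F_0^*\Omega)^2\,(F_0^*\Omega)^n\Bigr|\le C e^{-ct},\qquad \tfrac1{n!}\int_M S^G(F_0^*\Omega)^2\,(F_0^*\Omega)^n=0 .$$ -/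

import Mathlib

open Set MeasureTheory Manifold
open Bundle (TotalSpace)
open scoped Manifold ContDiff Topology

namespace TestConf

/-! ## Differential forms on complex manifolds

A complex manifold of dimension `n` is a charted space modelled on `ℂⁿ = Fin n → ℂ` with
holomorphic coordinate changes, `IsManifold 𝓘(ℂ, Cn n) ω X`.  Its underlying real manifold is
described by the model `𝓘(ℝ, Cn n)` and the same charts.  Mathlib identifies the tangent space at
`x` with `ℂⁿ` through the preferred chart at `x`. -/

/-- The model space `ℂⁿ`. -/
abbrev Cn (n : ℕ) : Type := Fin n → ℂ

/-- Multiplication by `i` on `ℂⁿ`, as a real linear map. -/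
noncomputable def mulI (n : ℕ) : Cn n →L[ℝ] Cn n :=
  (Complex.I • ContinuousLinearMap.id ℂ (Cn n)).restrictScalars ℝ

section Forms

variable {n m : ℕ}
  {X : Type*} [TopologicalSpace X] [ChartedSpace (Cn n) X]
  {Y : Type*} [TopologicalSpace Y] [ChartedSpace (Cn m) Y]

/-- The complex structure `J` on the real tangent spaces. -/
noncomputable def J (x : X) :
    TangentSpace 𝓘(ℝ, Cn n) x →L[ℝ] TangentSpace 𝓘(ℝ, Cn n) x := mulI n

variable (n X) in
/-- Real `2`-forms (without any regularity). -/
abbrev TwoForm : Type _ := ∀ x : X, TangentSpace 𝓘(ℝ, Cn n) x [⋀^Fin 2]→L[ℝ] ℝ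

/-- The pullback `f^*Ω`. -/
noncomputable def pullback (f : X → Y) (Ω : TwoForm m Y) : TwoForm n X := fun x =>
  (Ω (f x)).compContinuousLinearMap (mfderiv 𝓘(ℝ, Cn n) 𝓘(ℝ, Cn m) f x)

/-- The expression of a `2`-form in the preferred chart at `p` (meaningful on the target of that
chart): its pullback by the inverse of the chart. -/
noncomputable def inChart (η : TwoForm n X) (p : X) : Cn n → Cn n [⋀^Fin 2]→L[ℝ] ℝ := fun y =>
  (η ((chartAt (Cn n) p).symm y)).compContinuousLinearMap
    (mfderiv 𝓘(ℝ, Cn n) 𝓘(ℝ, Cn n) (chartAt (Cn n) p).symm y)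

/-- Kähler forms: smooth, closed, `J`-invariant and positive real `2`-forms. -/
structure IsKahlerForm (η : TwoForm n X) : Prop where
  smooth : ∀ p : X, ContDiffOn ℝ ∞ (inChart η p) (chartAt (Cn n) p).target
  closed : ∀ p : X, ∀ y ∈ (chartAt (Cn n) p).target, extDeriv (inChart η p) y = 0
  invariant : ∀ (x : X) (v w : TangentSpace 𝓘(ℝ, Cn n) x), η x ![J x v, J x w] = η x ![v, w]
  pos : ∀ (x : X) (v : TangentSpace 𝓘(ℝ, Cn n) x), v ≠ 0 → 0 < η x ![v, J x v]

/-- The form `i∂∂̄u = -½ d(du ∘ J)` of a function `u` on `ℂⁿ`. -/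
noncomputable def iddbarCn (u : Cn n → ℝ) (y : Cn n) : Cn n [⋀^Fin 2]→L[ℝ] ℝ :=
  (-(1 / 2 : ℝ)) • extDeriv (fun y' => ContinuousAlternatingMap.ofSubsingleton ℝ (Cn n) ℝ (0 : Fin 1)
    ((fderiv ℝ u y').comp (mulI n))) y

/-- The form `i∂∂̄u` of a function `u` on a complex manifold, computed at `x` in the
preferred chart at `x`. -/
noncomputable def iddbar (u : X → ℝ) : TwoForm n X := fun x =>
  iddbarCn (u ∘ (chartAt (Cn n) x).symm) (chartAt (Cn n) x x)

/-! ## Volume, scalar curvature -/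

/-- The matrix `H_{jk} = η(e_j, i e_k) - i η(e_j, e_k)` of a real `(1,1)`-form on `ℂⁿ`; if
`η = i ∑ η_{jk} dz_j ∧ dz̄_k` then `H_{jk} = 2 η_{jk}`. -/
noncomputable def hermMatrix (η : Cn n [⋀^Fin 2]→L[ℝ] ℝ) : Matrix (Fin n) (Fin n) ℂ :=
  Matrix.of fun j k =>
    ((η ![Pi.single j 1, Pi.single k Complex.I] : ℝ) : ℂ)
      - Complex.I * ((η ![Pi.single j 1, Pi.single k 1] : ℝ) : ℂ)

/-- The density of `ηⁿ/n!` with respect to Lebesgue measure in the preferred chart at `p`: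
the determinant of the hermitian matrix of `η`. -/
noncomputable def volDensity (η : TwoForm n X) (p : X) (y : Cn n) : ℝ :=
  (hermMatrix (inChart η p y)).det.re

open Classical in
/-- The measure `ηⁿ/n!`, the volume of the Kähler metric of `η`.  A countable family of
preferred charts covering `X` is chosen; each point of `X` is assigned to the first of these
charts that contains it, and the densities in the charts are added up.  (The result does not
depend on the choice, by the change of variables formula.) -/
noncomputable def kahlerVolume [MeasurableSpace X] (η : TwoForm n X) : Measure X :=
  if h : ∃ c : ℕ → X, (⋃ k, (chartAt (Cn n) (c k)).source) = univ then
    Measure.sum fun k : ℕ =>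
      ((volume.restrict (chartAt (Cn n) (h.choose k) ''
          disjointed (fun j => (chartAt (Cn n) (h.choose j)).source) k)).withDensity
        fun y => ENNReal.ofReal (volDensity η (h.choose k) y)).map
        (chartAt (Cn n) (h.choose k)).symm
  else 0

/-- The Ricci form `-i∂∂̄ log det` of a Kähler form `η` at `x`. -/
noncomputable def ricciForm (η : TwoForm n X) (x : X) : Cn n [⋀^Fin 2]→L[ℝ] ℝ :=
  -iddbarCn (fun y => Real.log (volDensity η x y)) (chartAt (Cn n) x x)

/-- The scalar curvature of a Kähler form `η`: the trace with respect to `η` of its Ricci form,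
that is, of the curvature of the Chern connection on the anticanonical bundle. -/
noncomputable def scalarCurvature (η : TwoForm n X) (x : X) : ℝ :=
  ((hermMatrix (inChart η x (chartAt (Cn n) x x)))⁻¹ * hermMatrix (ricciForm η x)).trace.re

end Forms

/-! ## The reduced scalar curvature and the modified Calabi functional -/

section Reduced

variable {n : ℕ} {X : Type*} [TopologicalSpace X] [ChartedSpace (Cn n) X]
  (EG : Type*) [NormedAddCommGroup EG] [NormedSpace ℝ EG]
  (G : Type*) [TopologicalSpace G] [ChartedSpace EG G] [Group G] [MulAction G X]

variable {G} in
/-- The vector field on `X` generated by `ξ ∈ Lie(G)`. -/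
noncomputable def fundamentalField (ξ : GroupLieAlgebra 𝓘(ℝ, EG) G) (x : X) :
    TangentSpace 𝓘(ℝ, Cn n) x :=
  mfderiv 𝓘(ℝ, EG) 𝓘(ℝ, Cn n) (fun g : G => g • x) 1 ξ

variable [MeasurableSpace X]

/-- The space `P^G_η`: smooth functions `f` of mean value zero whose hamiltonian vector field
`J∇f` lies in `Lie(G)`.  With `g(v, w) = η(v, Jw)`, the equation `V = J∇f` reads
`η(V, ·) = -df`.  (If `η` is `G`-invariant then such a field is Killing.) -/
structure IsKillingPotential (η : TwoForm n X) (f : X → ℝ) : Prop where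
  smooth : ContMDiff 𝓘(ℝ, Cn n) 𝓘(ℝ, ℝ) ∞ f
  mean_zero : ∫ x, f x ∂(kahlerVolume η) = 0
  hamiltonian : ∃ ξ : GroupLieAlgebra 𝓘(ℝ, EG) G, ∀ (x : X) (w : TangentSpace 𝓘(ℝ, Cn n) x),
    η x ![fundamentalField EG ξ x, w] = -(mfderiv 𝓘(ℝ, Cn n) 𝓘(ℝ, ℝ) f x w : ℝ)

/-- `p` is the `L²`-orthogonal projection of `f` to `P^G_η`. -/
def IsKillingProjection (η : TwoForm n X) (f p : X → ℝ) : Prop :=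
  IsKillingPotential EG G η p ∧
    ∀ q : X → ℝ, IsKillingPotential EG G η q → ∫ x, (f x - p x) * q x ∂(kahlerVolume η) = 0

open Classical in
/-- The projection `Π^G_η f`. -/
noncomputable def killingProjection (η : TwoForm n X) (f : X → ℝ) : X → ℝ :=
  if h : ∃ p, IsKillingProjection EG G η f p then h.choose else 0

/-- The reduced scalar curvature `S^G = S - S̲ - Π^G S`, where `S̲` is the average of `S`. -/
noncomputable def reducedScalarCurvature (η : TwoForm n X) (x : X) : ℝ :=
  scalarCurvature η x - (⨍ y, scalarCurvature η y ∂(kahlerVolume η))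
    - killingProjection EG G η (scalarCurvature η) x

/-- `(1/n!) ∫ S^G(η)² ηⁿ`. -/
noncomputable def calabiEnergy (η : TwoForm n X) : ℝ :=
  ∫ x, reducedScalarCurvature EG G η x ^ 2 ∂(kahlerVolume η)

/-- The modified Calabi functional `Ca^G(φ)` on Kähler potentials with respect to `η`, that is,
the energy of `η_φ = η + i∂∂̄φ`. -/
noncomputable def modifiedCalabi (η : TwoForm n X) (φ : X → ℝ) : ℝ :=
  calabiEnergy EG G (fun x => η x + iddbar φ x)

end Reduced

/-! ## Smooth test configurations -/

section TestConfiguration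

variable {n : ℕ} {X : Type*} [TopologicalSpace X] [ChartedSpace (Cn (n + 1)) X]
  (L : X → Type*) [∀ x, AddCommGroup (L x)] [∀ x, Module ℂ (L x)]

/-- The action of `Γ` on the total space of `L` covers the action on the base and is linear on
the fibres. -/
def IsLinearLift (Γ : Type*) [Group Γ] [MulAction Γ X] [MulAction Γ (TotalSpace ℂ L)] : Prop :=
  ∀ (g : Γ) (x : X), ∃ A : L x →ₗ[ℂ] L (g • x), ∀ v : L x,
    g • (⟨x, v⟩ : TotalSpace ℂ L) = ⟨g • x, A v⟩

variable [TopologicalSpace (TotalSpace ℂ L)] [∀ x, TopologicalSpace (L x)] [FiberBundle ℂ L]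

variable (n) in
/-- A smooth test configuration `L → X → ℂ`: the projection `π` is a proper holomorphic
submersion onto `ℂ`, and `ℂ*` acts holomorphically on the pair `(X, L)`, covering
multiplication on `ℂ`. -/
structure IsSmoothTestConfiguration [MulAction ℂˣ X] [MulAction ℂˣ (TotalSpace ℂ L)]
    (π : X → ℂ) : Prop where
  holomorphic : ContMDiff 𝓘(ℂ, Cn (n + 1)) 𝓘(ℂ, ℂ) ω π
  submersion : IsSubmersion 𝓘(ℂ, Cn (n + 1)) 𝓘(ℂ, ℂ) ω π
  proper : IsProperMap π
  action : ContMDiffSMul 𝓘(ℂ, ℂ) 𝓘(ℂ, Cn (n + 1)) ω ℂˣ X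
  equivariant : ∀ (c : ℂˣ) (x : X), π (c • x) = (c : ℂ) * π x
  action_bundle : ContMDiffSMul 𝓘(ℂ, ℂ) (𝓘(ℂ, Cn (n + 1)).prod 𝓘(ℂ, ℂ)) ω ℂˣ (TotalSpace ℂ L)
  linear : IsLinearLift L ℂˣ

variable (n) in
/-- The test configuration is `G`-invariant: `G` acts smoothly by holomorphic maps on the pair
`(X, L)`, trivially on `ℂ`, and commutes with `ℂ*`. -/
structure IsGInvariant (EG : Type*) [NormedAddCommGroup EG] [NormedSpace ℝ EG]
    (G : Type*) [TopologicalSpace G] [ChartedSpace EG G] [Group G]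
    [MulAction G X] [MulAction G (TotalSpace ℂ L)]
    [MulAction ℂˣ X] [MulAction ℂˣ (TotalSpace ℂ L)] (π : X → ℂ) : Prop where
  action : ContMDiffSMul 𝓘(ℝ, EG) 𝓘(ℝ, Cn (n + 1)) ∞ G X
  holomorphic : ∀ g : G, ContMDiff 𝓘(ℂ, Cn (n + 1)) 𝓘(ℂ, Cn (n + 1)) ω (fun x : X => g • x)
  action_bundle :
    ContMDiffSMul 𝓘(ℝ, EG) (𝓘(ℝ, Cn (n + 1)).prod 𝓘(ℝ, ℂ)) ∞ G (TotalSpace ℂ L)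
  holomorphic_bundle : ∀ g : G, ContMDiff (𝓘(ℂ, Cn (n + 1)).prod 𝓘(ℂ, ℂ))
    (𝓘(ℂ, Cn (n + 1)).prod 𝓘(ℂ, ℂ)) ω (fun v : TotalSpace ℂ L => g • v)
  linear : IsLinearLift L G
  invariant : ∀ (g : G) (x : X), π (g • x) = π x
  commute : SMulCommClass G ℂˣ X
  commute_bundle : SMulCommClass G ℂˣ (TotalSpace ℂ L)

variable (n) in
/-- A smooth hermitian metric on the line bundle `L`, given by `v ↦ |v|²`. -/
structure IsHermitianMetric (h : TotalSpace ℂ L → ℝ) : Prop where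
  smooth : ContMDiff (𝓘(ℝ, Cn (n + 1)).prod 𝓘(ℝ, ℂ)) 𝓘(ℝ, ℝ) ∞ h
  homogeneous : ∀ (x : X) (a : ℂ) (v : L x), h ⟨x, a • v⟩ = ‖a‖ ^ 2 * h ⟨x, v⟩
  pos : ∀ (x : X) (v : L x), v ≠ 0 → 0 < h ⟨x, v⟩

/-- The Chern curvature form `-i∂∂̄ log |s|²` of a hermitian metric, at the point `p`, where `s` is
the local holomorphic frame of `L` given by the preferred trivialization at `p`. -/
noncomputable def curvatureForm (h : TotalSpace ℂ L → ℝ) : TwoForm (n + 1) X := fun p =>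
  -iddbar (fun q : X => Real.log (h ⟨q, (trivializationAt ℂ L p).symm q (1 : ℂ)⟩)) p

/-- `Ω|_{X_z} ∈ c₁(L_z)` for every `z`: the restriction of `Ω` to each fibre of `π` is the
Chern curvature form of a hermitian metric on the restriction of `L` to that fibre.  (Every
hermitian metric on `L_z` extends to `L`.) -/
def RepresentsC1OnFibres (π : X → ℂ) (Ω : TwoForm (n + 1) X) : Prop :=
  ∀ z : ℂ, ∃ h : TotalSpace ℂ L → ℝ, IsHermitianMetric n L h ∧
    ∀ p : X, π p = z → ∀ v w : TangentSpace 𝓘(ℝ, Cn (n + 1)) p,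
      mfderiv 𝓘(ℝ, Cn (n + 1)) 𝓘(ℝ, ℂ) π p v = 0 →
      mfderiv 𝓘(ℝ, Cn (n + 1)) 𝓘(ℝ, ℂ) π p w = 0 →
      Ω p ![v, w] = curvatureForm L h p ![v, w]

end TestConfiguration

section Actions

variable {n : ℕ} {X : Type*} [TopologicalSpace X] [ChartedSpace (Cn (n + 1)) X]

/-- The element `e^{-t}` of `ℂ*`. -/
noncomputable def expNeg (t : ℝ) : ℂˣ := Units.mk0 (Complex.exp (-(t : ℂ))) (Complex.exp_ne_zero _)

/-- The generator `W` of the circle action; the orientation is such that `-JW` generates the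
real flow `t ↦ ρ_{e^{-t}}`. -/
noncomputable def circleField [MulAction ℂˣ X] (x : X) : TangentSpace 𝓘(ℝ, Cn (n + 1)) x :=
  mfderiv 𝓘(ℝ, ℝ) 𝓘(ℝ, Cn (n + 1)) (fun θ : ℝ => Circle.toUnits (Circle.exp (-θ)) • x) 0 (1 : ℝ)

/-- The circle action is hamiltonian: `i_W Ω = dH` for a smooth function `H`. -/
def IsHamiltonianCircleAction [MulAction ℂˣ X] (Ω : TwoForm (n + 1) X) : Prop :=
  ∃ H : X → ℝ, ContMDiff 𝓘(ℝ, Cn (n + 1)) 𝓘(ℝ, ℝ) ∞ H ∧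
    ∀ (x : X) (w : TangentSpace 𝓘(ℝ, Cn (n + 1)) x),
      Ω x ![circleField x, w] = mfderiv 𝓘(ℝ, Cn (n + 1)) 𝓘(ℝ, ℝ) H x w

/-- `G` acts on each fibre of `π` by hamiltonian diffeomorphisms: on each fibre, the contraction
of `Ω` with each vector field from `Lie(G)` is exact. -/
def IsHamiltonianOnFibres (EG : Type*) [NormedAddCommGroup EG] [NormedSpace ℝ EG]
    (G : Type*) [TopologicalSpace G] [ChartedSpace EG G] [Group G] [MulAction G X]
    (π : X → ℂ) (Ω : TwoForm (n + 1) X) : Prop :=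
  ∀ (ξ : GroupLieAlgebra 𝓘(ℝ, EG) G) (z : ℂ), ∃ f : X → ℝ,
    ContMDiff 𝓘(ℝ, Cn (n + 1)) 𝓘(ℝ, ℝ) ∞ f ∧
    ∀ p : X, π p = z → ∀ w : TangentSpace 𝓘(ℝ, Cn (n + 1)) p,
      mfderiv 𝓘(ℝ, Cn (n + 1)) 𝓘(ℝ, ℂ) π p w = 0 →
      Ω p ![fundamentalField EG ξ p, w] = mfderiv 𝓘(ℝ, Cn (n + 1)) 𝓘(ℝ, ℝ) f p w

end Actions

end TestConf

open TestConf

namespace TestConf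

set_option linter.unusedSectionVars false

/-- The derivative of a map between real manifolds, as a map of the model spaces. -/
noncomputable def rderiv (E : Type*) [NormedAddCommGroup E] [NormedSpace ℝ E]
    {X : Type*} [TopologicalSpace X] [ChartedSpace E X]
    (E' : Type*) [NormedAddCommGroup E'] [NormedSpace ℝ E']
    {Y : Type*} [TopologicalSpace Y] [ChartedSpace E' Y] (f : X → Y) (x : X) : E →L[ℝ] E' :=
  mfderiv 𝓘(ℝ, E) 𝓘(ℝ, E') f x

/-! ## Passing from complex to real manifolds -/

section RealComplex

variable {E : Type*} [NormedAddCommGroup E] [NormedSpace ℂ E]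
  {X : Type*} [TopologicalSpace X] [ChartedSpace E X]
  {E' : Type*} [NormedAddCommGroup E'] [NormedSpace ℂ E']
  {Y : Type*} [TopologicalSpace Y] [ChartedSpace E' Y]

theorem isManifold_real [IsManifold 𝓘(ℂ, E) ω X] : IsManifold 𝓘(ℝ, E) ∞ X := by
  refine isManifold_of_contDiffOn _ _ _ fun e e' he he' => ?_
  have := (contDiffGroupoid ω 𝓘(ℂ, E)).compatible he he'
  rw [contDiffGroupoid, mem_groupoid_of_pregroupoid] at this
  exact (this.1.restrict_scalars ℝ).of_le (by simp)

theorem contMDiffAt_real {f : X → Y} {x : X} (h : ContMDiffAt 𝓘(ℂ, E) 𝓘(ℂ, E') ω f x) :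
    ContMDiffAt 𝓘(ℝ, E) 𝓘(ℝ, E') ∞ f x := by
  rw [contMDiffAt_iff] at h ⊢
  exact ⟨h.1, (h.2.restrict_scalars ℝ).of_le (by simp)⟩

theorem hasMFDerivAt_real {f : X → Y} {x : X} (h : MDifferentiableAt 𝓘(ℂ, E) 𝓘(ℂ, E') f x) :
    HasMFDerivAt 𝓘(ℝ, E) 𝓘(ℝ, E') f x
      ((mfderiv 𝓘(ℂ, E) 𝓘(ℂ, E') f x : E →L[ℂ] E').restrictScalars ℝ : E →L[ℝ] E') :=
  ⟨h.hasMFDerivAt.1, h.hasMFDerivAt.2.restrictScalars ℝ⟩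

theorem rderiv_I_smul {f : X → Y} {x : X} (h : MDifferentiableAt 𝓘(ℂ, E) 𝓘(ℂ, E') f x)
    (v : E) : rderiv E E' f x (Complex.I • v) = Complex.I • rderiv E E' f x v := by
  have : rderiv E E' f x = (mfderiv 𝓘(ℂ, E) 𝓘(ℂ, E') f x : E →L[ℂ] E').restrictScalars ℝ :=
    (hasMFDerivAt_real h).mfderiv
  rw [this]
  exact (mfderiv 𝓘(ℂ, E) 𝓘(ℂ, E') f x : E →L[ℂ] E').map_smul Complex.I v

end RealComplex

/-! ## Alternating two-forms on a vector space -/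

section AltTwo

variable {E : Type*} [NormedAddCommGroup E] [NormedSpace ℝ E]

theorem alt_swap (η : E [⋀^Fin 2]→L[ℝ] ℝ) (a b : E) : η ![b, a] = -η ![a, b] := by
  have := η.toAlternatingMap.map_swap ![a, b] (i := 0) (j := 1) (by decide)
  have h : ![a, b] ∘ Equiv.swap (0 : Fin 2) 1 = ![b, a] := by
    ext i; fin_cases i <;> simp
  rw [h] at this
  exact this

theorem alt_add_left (η : E [⋀^Fin 2]→L[ℝ] ℝ) (a b c : E) :
    η ![a + b, c] = η ![a, c] + η ![b, c] := by
  have hu : ∀ d : E, Function.update ![a, c] 0 d = ![d, c] := fun d => by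
    ext i; fin_cases i <;> simp
  have := η.toMultilinearMap.map_update_add ![a, c] 0 a b
  rw [hu, hu, hu] at this
  exact this

theorem alt_smul_left (η : E [⋀^Fin 2]→L[ℝ] ℝ) (r : ℝ) (a c : E) :
    η ![r • a, c] = r * η ![a, c] := by
  have hu : ∀ d : E, Function.update ![a, c] 0 d = ![d, c] := fun d => by
    ext i; fin_cases i <;> simp
  have := η.toMultilinearMap.map_update_smul ![a, c] 0 r a
  rw [hu, hu] at this
  exact this

theorem alt_add_right (η : E [⋀^Fin 2]→L[ℝ] ℝ) (a b c : E) :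
    η ![c, a + b] = η ![c, a] + η ![c, b] := by
  rw [alt_swap, alt_add_left, alt_swap η c a, alt_swap η c b]; ring

theorem alt_smul_right (η : E [⋀^Fin 2]→L[ℝ] ℝ) (r : ℝ) (a c : E) :
    η ![c, r • a] = r * η ![c, a] := by
  rw [alt_swap, alt_smul_left, alt_swap η c a]; ring

/-- The bilinear form of an alternating `2`-form. -/
noncomputable def altBilin (η : E [⋀^Fin 2]→L[ℝ] ℝ) : E →ₗ[ℝ] E →ₗ[ℝ] ℝ :=
  LinearMap.mk₂ ℝ (fun a b => η ![a, b]) (alt_add_left η)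
    (fun r a c => by rw [alt_smul_left, smul_eq_mul]) (fun c a b => alt_add_right η a b c)
    (fun r c a => by rw [alt_smul_right, smul_eq_mul])

theorem altBilin_apply (η : E [⋀^Fin 2]→L[ℝ] ℝ) (a b : E) : altBilin η a b = η ![a, b] := rfl

theorem comp_vec_two {E F : Type*} (f : E → F) (a b : E) : f ∘ ![a, b] = ![f a, f b] := by
  ext i; fin_cases i <;> rfl

theorem alt_comp_apply {F : Type*} [NormedAddCommGroup F] [NormedSpace ℝ F]
    (η : F [⋀^Fin 2]→L[ℝ] ℝ) (A : E →L[ℝ] F) (a b : E) :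
    η.compContinuousLinearMap A ![a, b] = η ![A a, A b] := by
  rw [ContinuousAlternatingMap.compContinuousLinearMap_apply, comp_vec_two]

theorem abs_alt_le (η : E [⋀^Fin 2]→L[ℝ] ℝ) (a b : E) : |η ![a, b]| ≤ ‖η‖ * ‖a‖ * ‖b‖ := by
  simpa [Fin.prod_univ_two, mul_assoc] using η.le_opNorm ![a, b]

variable {Z : Type*} [NormedAddCommGroup Z] [NormedSpace ℝ Z] [FiniteDimensional ℝ E]

theorem contDiffAt_alt_of_apply {k : ℕ∞ω} {f : Z → E [⋀^Fin 2]→L[ℝ] ℝ} {z : Z}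
    (h : ∀ a b, ContDiffAt ℝ k (fun z => f z ![a, b]) z) : ContDiffAt ℝ k f z := by
  let b := Module.finBasis ℝ E
  let T : (E [⋀^Fin 2]→L[ℝ] ℝ) →ₗ[ℝ] (Fin _ × Fin _ → ℝ) :=
    LinearMap.pi fun ij => (ContinuousAlternatingMap.apply ℝ E ℝ ![b ij.1, b ij.2]).toLinearMap
  have hT : LinearMap.ker T = ⊥ := by
    rw [LinearMap.ker_eq_bot']
    intro η hη
    have h0 : altBilin η = 0 := by
      refine b.ext fun i => b.ext fun j => ?_
      exact congrFun hη (i, j)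
    ext v
    have : v = ![v 0, v 1] := by ext i; fin_cases i <;> rfl
    rw [this, ← altBilin_apply, h0]; rfl
  obtain ⟨S, hS⟩ := T.exists_leftInverse_of_injective hT
  have hf : f = fun z => S.toContinuousLinearMap (T (f z)) := by
    ext1 z
    exact (LinearMap.congr_fun hS (f z)).symm
  rw [hf]
  refine S.toContinuousLinearMap.contDiff.contDiffAt.comp z (contDiffAt_pi.2 fun ij => ?_)
  exact h _ _

theorem contDiffAt_alt_apply {k : ℕ∞ω} {f : Z → E [⋀^Fin 2]→L[ℝ] ℝ} {x y : Z → E} {z : Z}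
    (hf : ContDiffAt ℝ k f z) (hx : ContDiffAt ℝ k x z) (hy : ContDiffAt ℝ k y z) :
    ContDiffAt ℝ k (fun z => f z ![x z, y z]) z := by
  let b := Module.finBasis ℝ E
  have key : ∀ z, f z ![x z, y z] = ∑ i, ∑ j,
      b.repr (x z) i * (b.repr (y z) j * f z ![b i, b j]) := by
    intro z
    rw [← altBilin_apply]
    conv_lhs => rw [← b.sum_repr (x z), ← b.sum_repr (y z)]
    simp only [map_sum, LinearMap.sum_apply, map_smul, LinearMap.smul_apply, smul_eq_mul,
      altBilin_apply, Finset.mul_sum]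
    rw [Finset.sum_comm]
    refine Finset.sum_congr rfl fun i _ => Finset.sum_congr rfl fun j _ => ?_
    ring
  simp_rw [key]
  have hc : ∀ (i) {u : Z → E}, ContDiffAt ℝ k u z → ContDiffAt ℝ k (fun z => b.repr (u z) i) z :=
    fun i u hu => (LinearMap.toContinuousLinearMap (b.coord i)).contDiff.contDiffAt.comp z hu
  refine ContDiffAt.sum fun i _ => ContDiffAt.sum fun j _ => ?_
  refine (hc i hx).mul ((hc j hy).mul ?_)
  exact (ContinuousAlternatingMap.apply ℝ E ℝ ![b i, b j]).contDiff.contDiffAt.comp z hf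

end AltTwo

/-! ## Hermitian matrices of `(1,1)`-forms -/

section Herm

variable {n m : ℕ}

@[simp] theorem mulI_apply (v : Cn n) : mulI n v = Complex.I • v := rfl

/-- A real `2`-form on `ℂⁿ` is of type `(1,1)`. -/
def IsOneOne (η : Cn n [⋀^Fin 2]→L[ℝ] ℝ) : Prop :=
  ∀ v w, η ![Complex.I • v, Complex.I • w] = η ![v, w]

/-- The sesquilinear form of a `(1,1)`-form. -/
noncomputable def sesq (η : Cn n [⋀^Fin 2]→L[ℝ] ℝ) (v w : Cn n) : ℂ :=
  ((η ![v, Complex.I • w] : ℝ) : ℂ) - Complex.I * ((η ![v, w] : ℝ) : ℂ)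

theorem hermMatrix_apply (η : Cn n [⋀^Fin 2]→L[ℝ] ℝ) (j k : Fin n) :
    hermMatrix η j k = sesq η (Pi.single j 1) (Pi.single k 1) := by
  have : (Pi.single k Complex.I : Cn n) = Complex.I • Pi.single k 1 := by
    rw [← Pi.single_smul]; simp
  rw [hermMatrix, Matrix.of_apply, this]; rfl

theorem sesq_add_left (η : Cn n [⋀^Fin 2]→L[ℝ] ℝ) (a b c : Cn n) :
    sesq η (a + b) c = sesq η a c + sesq η b c := by
  simp only [sesq, alt_add_left]; push_cast; ring

theorem sesq_add_right (η : Cn n [⋀^Fin 2]→L[ℝ] ℝ) (a b c : Cn n) :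
    sesq η c (a + b) = sesq η c a + sesq η c b := by
  simp only [sesq, alt_add_right, smul_add]; push_cast; ring

theorem IsOneOne.apply_I_left {η : Cn n [⋀^Fin 2]→L[ℝ] ℝ} (h : IsOneOne η) (v w : Cn n) :
    η ![Complex.I • v, w] = -η ![v, Complex.I • w] := by
  have := h v (Complex.I • w)
  rw [smul_smul, Complex.I_mul_I, neg_one_smul, ← neg_one_smul ℝ, alt_smul_right] at this
  linarith

theorem complex_smul_eq (c : ℂ) (v : Cn n) : c • v = c.re • v + c.im • (Complex.I • v) := by
  ext i
  simp only [Pi.smul_apply, Pi.add_apply, smul_eq_mul, Complex.real_smul]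
  conv_lhs => rw [← Complex.re_add_im c]
  ring

theorem sesq_smul_left {η : Cn n [⋀^Fin 2]→L[ℝ] ℝ} (h : IsOneOne η) (c : ℂ) (v w : Cn n) :
    sesq η (c • v) w = c * sesq η v w := by
  rw [complex_smul_eq, sesq_add_left]
  simp only [sesq, alt_smul_left, h.apply_I_left]
  rw [smul_smul, Complex.I_mul_I, neg_one_smul, ← neg_one_smul ℝ w, alt_smul_right]
  conv_rhs => rw [← Complex.re_add_im c]
  push_cast
  ring_nf
  simp only [Complex.I_sq]
  ring

theorem sesq_swap {η : Cn n [⋀^Fin 2]→L[ℝ] ℝ} (h : IsOneOne η) (v w : Cn n) :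
    sesq η w v = (starRingEnd ℂ) (sesq η v w) := by
  simp only [sesq, map_sub, map_mul, Complex.conj_ofReal, Complex.conj_I]
  rw [alt_swap η (Complex.I • v) w, h.apply_I_left, alt_swap η v w]
  push_cast; ring

theorem sesq_smul_right {η : Cn n [⋀^Fin 2]→L[ℝ] ℝ} (h : IsOneOne η) (c : ℂ) (v w : Cn n) :
    sesq η v (c • w) = (starRingEnd ℂ) c * sesq η v w := by
  rw [sesq_swap h, sesq_smul_left h, map_mul, ← sesq_swap h]

theorem sesq_sum_left {ι : Type*} (s : Finset ι) (η : Cn n [⋀^Fin 2]→L[ℝ] ℝ) (f : ι → Cn n)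
    (w : Cn n) : sesq η (∑ i ∈ s, f i) w = ∑ i ∈ s, sesq η (f i) w :=
  map_sum (AddMonoidHom.mk' (fun v => sesq η v w) fun a b => sesq_add_left η a b w) f s

theorem sesq_sum_right {ι : Type*} (s : Finset ι) (η : Cn n [⋀^Fin 2]→L[ℝ] ℝ) (f : ι → Cn n)
    (w : Cn n) : sesq η w (∑ i ∈ s, f i) = ∑ i ∈ s, sesq η w (f i) :=
  map_sum (AddMonoidHom.mk' (fun v => sesq η w v) fun a b => sesq_add_right η a b w) f s

theorem sum_smul_single (v : Cn n) : v = ∑ j, v j • (Pi.single j (1 : ℂ) : Cn n) := by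
  ext i
  simp [Finset.sum_apply, Pi.single_apply]

theorem sesq_eq_sum {η : Cn n [⋀^Fin 2]→L[ℝ] ℝ} (h : IsOneOne η) (v w : Cn n) :
    sesq η v w = ∑ j, ∑ k, v j * hermMatrix η j k * (starRingEnd ℂ) (w k) := by
  conv_lhs => rw [sum_smul_single v, sum_smul_single w]
  rw [sesq_sum_left]
  refine Finset.sum_congr rfl fun j _ => ?_
  rw [sesq_sum_right]
  refine Finset.sum_congr rfl fun k _ => ?_
  rw [sesq_smul_left h, sesq_smul_right h, hermMatrix_apply]
  ring

/-- The matrix of a real-linear map that is complex linear. -/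
noncomputable def jacobian (A : Cn n →L[ℝ] Cn m) : Matrix (Fin m) (Fin n) ℂ :=
  Matrix.of fun p j => A (Pi.single j 1) p

theorem isOneOne_comp {η : Cn m [⋀^Fin 2]→L[ℝ] ℝ} (h : IsOneOne η) {A : Cn n →L[ℝ] Cn m}
    (hA : ∀ v, A (Complex.I • v) = Complex.I • A v) : IsOneOne (η.compContinuousLinearMap A) := by
  intro v w
  rw [alt_comp_apply, alt_comp_apply, hA, hA, h]

theorem hermMatrix_comp {η : Cn m [⋀^Fin 2]→L[ℝ] ℝ} (h : IsOneOne η) {A : Cn n →L[ℝ] Cn m}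
    (hA : ∀ v, A (Complex.I • v) = Complex.I • A v) :
    hermMatrix (η.compContinuousLinearMap A) =
      (jacobian A).transpose * hermMatrix η * (jacobian A).map (starRingEnd ℂ) := by
  ext j k
  have : hermMatrix (η.compContinuousLinearMap A) j k =
      sesq η (A (Pi.single j 1)) (A (Pi.single k 1)) := by
    rw [hermMatrix_apply, sesq, sesq, alt_comp_apply, alt_comp_apply, hA]
  rw [this, sesq_eq_sum h, Matrix.mul_apply]
  simp only [Matrix.mul_apply, Finset.sum_mul, Matrix.transpose_apply, Matrix.map_apply, jacobian,
    Matrix.of_apply]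
  rw [Finset.sum_comm]

open scoped ComplexOrder in
theorem hermMatrix_posDef {η : Cn n [⋀^Fin 2]→L[ℝ] ℝ} (h : IsOneOne η)
    (hpos : ∀ v, v ≠ 0 → 0 < η ![v, Complex.I • v]) : (hermMatrix η).PosDef := by
  refine Matrix.PosDef.of_dotProduct_mulVec_pos ?_ fun x hx => ?_
  · ext j k
    rw [Matrix.conjTranspose_apply, hermMatrix_apply, hermMatrix_apply, sesq_swap h]
    simp
  · have hx' : star x ≠ 0 := by simpa using hx
    have key : star x ⬝ᵥ (hermMatrix η).mulVec x = sesq η (star x) (star x) := by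
      rw [sesq_eq_sum h, dotProduct]
      refine Finset.sum_congr rfl fun j _ => ?_
      rw [Matrix.mulVec, dotProduct, Finset.mul_sum]
      refine Finset.sum_congr rfl fun k _ => ?_
      simp [mul_assoc]
    have h0 : η ![star x, star x] = 0 := by have := alt_swap η (star x) (star x); linarith
    rw [key, sesq, h0]
    simpa using hpos _ hx'

open scoped ComplexOrder in
theorem hermMatrix_det_re_pos {η : Cn n [⋀^Fin 2]→L[ℝ] ℝ} (h : IsOneOne η)
    (hpos : ∀ v, v ≠ 0 → 0 < η ![v, Complex.I • v]) :
    0 < (hermMatrix η).det.re ∧ (hermMatrix η).det.im = 0 := by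
  have := (hermMatrix_posDef h hpos).det_pos
  rw [Complex.lt_def] at this
  exact ⟨this.1, this.2.symm⟩

theorem det_re_hermMatrix_comp {η : Cn n [⋀^Fin 2]→L[ℝ] ℝ} (h : IsOneOne η) {A : Cn n →L[ℝ] Cn n}
    (hA : ∀ v, A (Complex.I • v) = Complex.I • A v) :
    (hermMatrix (η.compContinuousLinearMap A)).det.re =
      Complex.normSq (jacobian A).det * (hermMatrix η).det.re := by
  rw [hermMatrix_comp h hA, Matrix.det_mul, Matrix.det_mul, Matrix.det_transpose]
  have : ((jacobian A).map (starRingEnd ℂ)).det = (starRingEnd ℂ) (jacobian A).det :=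
    (RingHom.map_det (starRingEnd ℂ) _).symm
  rw [this, mul_right_comm, Complex.mul_conj, Complex.re_ofReal_mul]

theorem trace_hermMatrix_comp {η ρ : Cn n [⋀^Fin 2]→L[ℝ] ℝ} (h : IsOneOne η) (hρ : IsOneOne ρ)
    {A : Cn n →L[ℝ] Cn n} (hA : ∀ v, A (Complex.I • v) = Complex.I • A v)
    (hdet : (jacobian A).det ≠ 0) :
    ((hermMatrix (η.compContinuousLinearMap A))⁻¹ *
      hermMatrix (ρ.compContinuousLinearMap A)).trace = ((hermMatrix η)⁻¹ * hermMatrix ρ).trace := by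
  rw [hermMatrix_comp h hA, hermMatrix_comp hρ hA, Matrix.mul_inv_rev, Matrix.mul_inv_rev]
  set a := jacobian A
  set b := a.map (starRingEnd ℂ)
  have hb : IsUnit b.det := by
    have : b.det = (starRingEnd ℂ) a.det := (RingHom.map_det (starRingEnd ℂ) _).symm
    rw [this, isUnit_iff_ne_zero]
    simpa using hdet
  have ha : IsUnit a.transpose.det := by
    rw [Matrix.det_transpose]; exact isUnit_iff_ne_zero.2 hdet
  have e1 : b⁻¹ * ((hermMatrix η)⁻¹ * a.transpose⁻¹) * (a.transpose * hermMatrix ρ * b) =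
      b⁻¹ * ((hermMatrix η)⁻¹ * (a.transpose⁻¹ * a.transpose) * hermMatrix ρ * b) := by
    simp only [Matrix.mul_assoc]
  rw [e1, Matrix.nonsing_inv_mul _ ha, Matrix.mul_one, Matrix.trace_mul_comm, Matrix.mul_assoc,
    Matrix.mul_nonsing_inv _ hb, Matrix.mul_one]

theorem det_eq_normSq_jacobian {A : Cn n →L[ℝ] Cn n}
    (hA : ∀ v, A (Complex.I • v) = Complex.I • A v) :
    A.det = Complex.normSq (jacobian A).det := by
  let B : Cn n →ₗ[ℂ] Cn n :=
    { toFun := A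
      map_add' := map_add A
      map_smul' := fun c v => by
        rw [complex_smul_eq, map_add, map_smul, map_smul, hA, RingHom.id_apply,
          complex_smul_eq c (A v)] }
  have h1 : A.toLinearMap = B.restrictScalars ℝ := rfl
  have h2 : LinearMap.toMatrix' B = jacobian A := by
    ext p j
    rw [LinearMap.toMatrix'_apply, jacobian, Matrix.of_apply]
    have : (fun j' => if j' = j then (1 : ℂ) else 0) = Pi.single j 1 := by
      ext i; simp [Pi.single_apply]
    try rw [this]
    rfl
  rw [ContinuousLinearMap.det, h1, LinearMap.det_restrictScalars, Algebra.norm_complex_eq,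
    ← h2, LinearMap.det_toMatrix']
  rfl

end Herm

/-! ## The operator `i∂∂̄` on `ℂⁿ` -/

section Iddbar

variable {n m : ℕ}

/-- The `1`-form `du ∘ J`. -/
noncomputable def dcForm (u : Cn n → ℝ) (y : Cn n) : Cn n [⋀^Fin 1]→L[ℝ] ℝ :=
  ContinuousAlternatingMap.ofSubsingleton ℝ (Cn n) ℝ (0 : Fin 1) ((fderiv ℝ u y).comp (mulI n))

theorem iddbarCn_eq (u : Cn n → ℝ) (y : Cn n) :
    iddbarCn u y = (-(1 / 2 : ℝ)) • extDeriv (dcForm u) y := rfl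

theorem contDiffAt_dcForm {u : Cn n → ℝ} {y : Cn n} (hu : ContDiffAt ℝ ∞ u y) :
    ContDiffAt ℝ ∞ (dcForm u) y := by
  have h1 : ContDiffAt ℝ ∞ (fderiv ℝ u) y := hu.fderiv_right (by simp)
  have h2 : ContDiffAt ℝ ∞ (fun y => (fderiv ℝ u y).comp (mulI n)) y :=
    h1.clm_comp contDiffAt_const
  exact (ContinuousAlternatingMap.ofSubsingletonLIE (𝕜 := ℝ) (E := Cn n) (F := ℝ)
    (0 : Fin 1)).contDiff.contDiffAt.comp y h2

theorem contDiffAt_iddbarCn {u : Cn n → ℝ} {y : Cn n} (hu : ContDiffAt ℝ ∞ u y) :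
    ContDiffAt ℝ ∞ (iddbarCn u) y := by
  have h1 : ContDiffAt ℝ ∞ (fderiv ℝ (dcForm u)) y :=
    (contDiffAt_dcForm hu).fderiv_right (by simp)
  have h2 : ContDiffAt ℝ ∞ (extDeriv (dcForm u)) y :=
    ContDiffAt.comp (g := fun L : Cn n →L[ℝ] Cn n [⋀^Fin 1]→L[ℝ] ℝ =>
        ContinuousAlternatingMap.alternatizeUncurryFinCLM ℝ (Cn n) ℝ L) y
      (ContinuousLinearMap.contDiff _).contDiffAt h1
  exact h2.const_smul _

theorem iddbarCn_congr {u v : Cn n → ℝ} {y : Cn n} (h : u =ᶠ[𝓝 y] v) :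
    iddbarCn u y = iddbarCn v y := by
  rw [iddbarCn_eq, iddbarCn_eq]
  congr 1
  refine Filter.EventuallyEq.extDeriv_eq ?_
  filter_upwards [h.fderiv (𝕜 := ℝ)] with z hz
  rw [dcForm, dcForm, hz]

theorem iddbarCn_add {u v : Cn n → ℝ} {y : Cn n} (hu : ContDiffAt ℝ ∞ u y)
    (hv : ContDiffAt ℝ ∞ v y) :
    iddbarCn (fun z => u z + v z) y = iddbarCn u y + iddbarCn v y := by
  rw [iddbarCn_eq, iddbarCn_eq, iddbarCn_eq, ← smul_add, ← extDeriv_add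
    ((contDiffAt_dcForm hu).differentiableAt (by simp))
    ((contDiffAt_dcForm hv).differentiableAt (by simp))]
  congr 1
  refine Filter.EventuallyEq.extDeriv_eq ?_
  filter_upwards [(hu.of_le (m := 1) (by simp)).eventually (by simp),
    (hv.of_le (m := 1) (by simp)).eventually (by simp)] with z hz hz'
  ext w
  simp [dcForm, fderiv_fun_add (hz.differentiableAt (by simp)) (hz'.differentiableAt (by simp))]

theorem dcForm_comp {u : Cn m → ℝ} {k : Cn n → Cn m} {y : Cn n} (hu : DifferentiableAt ℝ u (k y))
    (hk : DifferentiableAt ℝ k y)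
    (hI : ∀ v, fderiv ℝ k y (Complex.I • v) = Complex.I • fderiv ℝ k y v) :
    dcForm (u ∘ k) y = (dcForm u (k y)).compContinuousLinearMap (fderiv ℝ k y) := by
  ext w
  simp [dcForm, fderiv_comp y hu hk, hI]

theorem fderiv_real_I_smul {E F : Type*} [NormedAddCommGroup E] [NormedSpace ℂ E]
    [NormedAddCommGroup F] [NormedSpace ℂ F] {k : E → F} {y : E} (hk : DifferentiableAt ℂ k y)
    (v : E) : fderiv ℝ k y (Complex.I • v) = Complex.I • fderiv ℝ k y v := by
  rw [hk.fderiv_restrictScalars ℝ]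
  exact (fderiv ℂ k y).map_smul _ _

theorem iddbarCn_comp {u : Cn m → ℝ} {k : Cn n → Cn m} {y : Cn n}
    (hu : ContDiffAt ℝ ∞ u (k y)) (hk : ContDiffAt ℂ ω k y) :
    iddbarCn (u ∘ k) y = (iddbarCn u (k y)).compContinuousLinearMap (fderiv ℝ k y) := by
  have hk' : ContDiffAt ℝ ω k y := hk.restrict_scalars ℝ
  have e : dcForm (u ∘ k) =ᶠ[𝓝 y]
      fun z => (dcForm u (k z)).compContinuousLinearMap (fderiv ℝ k z) := by
    filter_upwards [hk.eventually (by simp), hk.continuousAt.eventually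
      ((hu.of_le (m := 1) (by simp)).eventually (by simp))] with z hz hz'
    exact dcForm_comp (hz'.differentiableAt (by simp))
      ((hz.restrict_scalars ℝ).differentiableAt (by simp))
      (fderiv_real_I_smul (hz.differentiableAt (by simp)))
  rw [iddbarCn_eq, iddbarCn_eq, e.extDeriv_eq, extDeriv_pullback (r := ω)
    ((contDiffAt_dcForm hu).differentiableAt (by simp)) hk' (by simp)]
  rfl

theorem iddbarCn_re {h : Cn n → ℂ} {y : Cn n} (hh : ContDiffAt ℂ ω h y) :
    iddbarCn (fun z => (h z).re) y = 0 := by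
  have hR : ContDiffAt ℝ ω h y := hh.restrict_scalars ℝ
  have him : ContDiffAt ℝ ω (fun z => -(h z).im) y :=
    (Complex.imCLM.contDiff.contDiffAt.comp y hR).neg
  have e : dcForm (fun z => (h z).re) =ᶠ[𝓝 y]
      extDeriv (fun z => ContinuousAlternatingMap.constOfIsEmpty ℝ (Cn n) (Fin 0) (-(h z).im)) := by
    filter_upwards [hh.eventually (by simp)] with z hz
    rw [extDeriv_constOfIsEmpty, dcForm]
    congr 1
    have hz' : DifferentiableAt ℝ h z := (hz.restrict_scalars ℝ).differentiableAt (by simp)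
    have h1 : fderiv ℝ (fun z => (h z).re) z = Complex.reCLM.comp (fderiv ℝ h z) :=
      (Complex.reCLM.hasFDerivAt.comp z hz'.hasFDerivAt).fderiv
    have h2 : fderiv ℝ (fun z => -(h z).im) z = -(Complex.imCLM.comp (fderiv ℝ h z)) :=
      (Complex.imCLM.hasFDerivAt.comp z hz'.hasFDerivAt).neg.fderiv
    rw [h1, h2]
    ext v
    have := fderiv_real_I_smul (hz.differentiableAt (by simp)) v
    simp only [ContinuousLinearMap.comp_apply, mulI_apply, this]
    simp
  rw [iddbarCn_eq, e.extDeriv_eq, extDeriv_extDeriv_apply (r := ω) _ (by simp), smul_zero]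
  exact (ContinuousAlternatingMap.constOfIsEmptyLIE ℝ (Cn n) ℝ
    (Fin 0)).contDiff.contDiffAt.comp y him

theorem iddbarCn_log_normSq {f : Cn n → ℂ} {y : Cn n} (hf : ContDiffAt ℂ ω f y) (h0 : f y ≠ 0) :
    ContDiffAt ℝ ∞ (fun z => Real.log (Complex.normSq (f z))) y ∧
    iddbarCn (fun z => Real.log (Complex.normSq (f z))) y = 0 := by
  let h : Cn n → ℂ := fun z => Real.log (Complex.normSq (f y)) + 2 * Complex.log (f z / f y)
  have hd : ContDiffAt ℂ ω (fun z => f z / f y) y := hf.div_const _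
  have hh : ContDiffAt ℂ ω h y := by
    refine contDiffAt_const.add (contDiffAt_const.mul (ContDiffAt.comp y (Complex.contDiffAt_log ?_) hd))
    simp [div_self h0]
  have e : (fun z => Real.log (Complex.normSq (f z))) =ᶠ[𝓝 y] fun z => (h z).re := by
    filter_upwards [hf.continuousAt.eventually_ne h0] with z hz
    have : (h z).re = Real.log (Complex.normSq (f y)) + 2 * Real.log (‖f z / f y‖) := by
      simp [h, Complex.log_re]
    rw [this, Complex.normSq_eq_norm_sq, Complex.normSq_eq_norm_sq, Real.log_pow, Real.log_pow,
      norm_div, Real.log_div (by simpa using hz) (by simpa using h0)]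
    push_cast; ring
  refine ⟨?_, by rw [iddbarCn_congr e, iddbarCn_re hh]⟩
  refine ContDiffAt.congr_of_eventuallyEq ?_ e
  exact (Complex.reCLM.contDiff.contDiffAt.comp y (hh.restrict_scalars ℝ)).of_le (by simp)

theorem iddbarCn_apply {u : Cn n → ℝ} {y : Cn n} (hu : ContDiffAt ℝ ∞ u y) (v w : Cn n) :
    iddbarCn u y ![v, w] = (-(1 / 2 : ℝ)) * (fderiv ℝ (fderiv ℝ u) y v (Complex.I • w) -
      fderiv ℝ (fderiv ℝ u) y w (Complex.I • v)) := by
  have hd : DifferentiableAt ℝ (fderiv ℝ u) y :=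
    (hu.fderiv_right (m := ∞) (by simp)).differentiableAt (by simp)
  have hf : ∀ a b, fderiv ℝ (fun z => dcForm u z ![b]) y a =
      fderiv ℝ (fderiv ℝ u) y a (Complex.I • b) := by
    intro a b
    have h2 : HasFDerivAt (fun z => dcForm u z ![b])
        ((ContinuousLinearMap.apply ℝ ℝ (Complex.I • b)).comp (fderiv ℝ (fderiv ℝ u) y)) y :=
      (ContinuousLinearMap.apply ℝ ℝ (Complex.I • b)).hasFDerivAt.comp y hd.hasFDerivAt
    rw [h2.fderiv]; rfl
  rw [iddbarCn_eq, ContinuousAlternatingMap.smul_apply,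
    extDeriv_apply ((contDiffAt_dcForm hu).differentiableAt (by simp)), Fin.sum_univ_two]
  have r0 : (0 : Fin 2).removeNth ![v, w] = ![w] := by ext i; fin_cases i; rfl
  have r1 : (1 : Fin 2).removeNth ![v, w] = ![v] := by ext i; fin_cases i; rfl
  rw [r0, r1]
  simp [hf, sub_eq_add_neg]

theorem isOneOne_iddbarCn {u : Cn n → ℝ} {y : Cn n} (hu : ContDiffAt ℝ ∞ u y) :
    IsOneOne (iddbarCn u y) := by
  have hs : ∀ a b, fderiv ℝ (fderiv ℝ u) y a b = fderiv ℝ (fderiv ℝ u) y b a := by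
    have : IsSymmSndFDerivAt ℝ u y := by
      refine hu.isSymmSndFDerivAt ?_
      rw [minSmoothness_of_isRCLikeNormedField]
      exact WithTop.coe_le_coe.2 (le_top : (2 : ℕ∞) ≤ ⊤)
    exact fun a b => this a b
  intro v w
  rw [iddbarCn_apply hu, iddbarCn_apply hu]
  simp only [smul_smul, Complex.I_mul_I, neg_one_smul, map_neg]
  rw [hs _ w, hs _ v]
  ring

end Iddbar

/-! ## Determinants and inverses of matrices of smooth functions -/

section MatrixSmooth

variable {𝕜 : Type*} [NontriviallyNormedField 𝕜] [NormedAlgebra 𝕜 ℂ]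
  {Z : Type*} [NormedAddCommGroup Z] [NormedSpace 𝕜 Z] {n : ℕ} {r : ℕ∞ω} {z : Z}

theorem contDiffAt_det {A : Z → Matrix (Fin n) (Fin n) ℂ}
    (hA : ∀ i j, ContDiffAt 𝕜 r (fun z => A z i j) z) : ContDiffAt 𝕜 r (fun z => (A z).det) z := by
  simp only [Matrix.det_apply]
  refine ContDiffAt.sum fun σ _ => ?_
  simp only [Units.smul_def, zsmul_eq_mul]
  exact contDiffAt_const.mul (contDiffAt_prod fun i _ => hA _ _)

theorem contDiffAt_inv_apply {A : Z → Matrix (Fin n) (Fin n) ℂ}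
    (hA : ∀ i j, ContDiffAt 𝕜 r (fun z => A z i j) z) (hd : (A z).det ≠ 0) (i j : Fin n) :
    ContDiffAt 𝕜 r (fun z => (A z)⁻¹ i j) z := by
  simp only [Matrix.inv_def, Matrix.smul_apply, smul_eq_mul, Ring.inverse_eq_inv']
  refine ((contDiffAt_det hA).inv hd).mul ?_
  simp only [Matrix.adjugate_apply]
  refine contDiffAt_det fun p q => ?_
  simp only [Matrix.updateRow_apply]
  split_ifs
  · exact contDiffAt_const
  · exact hA p q

end MatrixSmooth

/-! ## Scalar curvature along the leaves of a linear foliation -/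

section Slice

variable {n m : ℕ}

/-- The restriction of the form `B` to the leaves parallel to the image of `ℓ`. -/
noncomputable def sliceForm (B : Cn m → Cn m [⋀^Fin 2]→L[ℝ] ℝ) (ℓ : Cn n →L[ℂ] Cn m) (u : Cn m) :
    Cn n [⋀^Fin 2]→L[ℝ] ℝ :=
  (B u).compContinuousLinearMap (ℓ.restrictScalars ℝ)

/-- The volume density of the leaves. -/
noncomputable def sliceDet (B : Cn m → Cn m [⋀^Fin 2]→L[ℝ] ℝ) (ℓ : Cn n →L[ℂ] Cn m) (u : Cn m) :
    ℝ :=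
  (hermMatrix (sliceForm B ℓ u)).det.re

/-- The scalar curvature of the leaves. -/
noncomputable def sliceScal (B : Cn m → Cn m [⋀^Fin 2]→L[ℝ] ℝ) (ℓ : Cn n →L[ℂ] Cn m) (u : Cn m) :
    ℝ :=
  ((hermMatrix (sliceForm B ℓ u))⁻¹ *
    hermMatrix (sliceForm (fun u => -iddbarCn (fun u => Real.log (sliceDet B ℓ u)) u) ℓ u)).trace.re

/-- A smooth positive `(1,1)`-form near `u`. -/
structure IsPositiveNear (B : Cn m → Cn m [⋀^Fin 2]→L[ℝ] ℝ) (u : Cn m) : Prop where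
  smooth : ContDiffAt ℝ ∞ B u
  oneOne : ∀ᶠ v in 𝓝 u, IsOneOne (B v)
  pos : ∀ᶠ v in 𝓝 u, ∀ w, w ≠ 0 → 0 < B v ![w, Complex.I • w]

variable {B : Cn m → Cn m [⋀^Fin 2]→L[ℝ] ℝ} {ℓ : Cn n →L[ℂ] Cn m} {u : Cn m}

theorem contDiffAt_hermMatrix {Z : Type*} [NormedAddCommGroup Z] [NormedSpace ℝ Z]
    {f : Z → Cn n [⋀^Fin 2]→L[ℝ] ℝ} {z : Z} (hf : ContDiffAt ℝ ∞ f z) (i j : Fin n) :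
    ContDiffAt ℝ ∞ (fun z => hermMatrix (f z) i j) z := by
  simp only [hermMatrix, Matrix.of_apply]
  have h : ∀ v, ContDiffAt ℝ ∞ (fun z => ((f z v : ℝ) : ℂ)) z := fun v =>
    Complex.ofRealCLM.contDiff.contDiffAt.comp z
      ((ContinuousAlternatingMap.apply ℝ (Cn n) ℝ v).contDiff.contDiffAt.comp z hf)
  exact (h _).sub (contDiffAt_const.mul (h _))

theorem contDiffAt_sliceForm (hB : ContDiffAt ℝ ∞ B u) : ContDiffAt ℝ ∞ (sliceForm B ℓ) u := by
  refine contDiffAt_alt_of_apply fun a b => ?_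
  simp only [sliceForm, alt_comp_apply]
  exact (ContinuousAlternatingMap.apply ℝ (Cn m) ℝ _).contDiff.contDiffAt.comp u hB

theorem isOneOne_sliceForm (hB : IsOneOne (B u)) : IsOneOne (sliceForm B ℓ u) :=
  isOneOne_comp hB fun v => ℓ.map_smul _ v

theorem sliceDet_pos (hB : IsOneOne (B u)) (hpos : ∀ w, w ≠ 0 → 0 < B u ![w, Complex.I • w])
    (hℓ : Function.Injective ℓ) : 0 < sliceDet B ℓ u ∧ (hermMatrix (sliceForm B ℓ u)).det ≠ 0 := by
  have := hermMatrix_det_re_pos (isOneOne_sliceForm (ℓ := ℓ) hB) fun v hv => by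
    rw [sliceForm, alt_comp_apply]
    have : ℓ.restrictScalars ℝ (Complex.I • v) = Complex.I • ℓ.restrictScalars ℝ v :=
      ℓ.map_smul _ v
    rw [this]
    exact hpos _ fun h => hv (hℓ (by simpa using h))
  exact ⟨this.1, fun h => by simp [h] at this⟩

theorem contDiffAt_sliceDet (hB : ContDiffAt ℝ ∞ B u) : ContDiffAt ℝ ∞ (sliceDet B ℓ) u :=
  Complex.reCLM.contDiff.contDiffAt.comp u
    (contDiffAt_det (contDiffAt_hermMatrix (contDiffAt_sliceForm hB)))

theorem contDiffAt_log_sliceDet (hB : IsPositiveNear B u) (hℓ : Function.Injective ℓ) :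
    ContDiffAt ℝ ∞ (fun u => Real.log (sliceDet B ℓ u)) u :=
  (contDiffAt_sliceDet hB.smooth).log
    (sliceDet_pos hB.oneOne.self_of_nhds hB.pos.self_of_nhds hℓ).1.ne'

theorem contDiffAt_sliceScal (hB : IsPositiveNear B u) (hℓ : Function.Injective ℓ) :
    ContDiffAt ℝ ∞ (sliceScal B ℓ) u := by
  refine Complex.reCLM.contDiff.contDiffAt.comp u ?_
  simp only [Matrix.trace, Matrix.diag, Matrix.mul_apply]
  refine ContDiffAt.sum fun i _ => ContDiffAt.sum fun j _ => ContDiffAt.mul ?_ ?_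
  · exact contDiffAt_inv_apply (contDiffAt_hermMatrix (contDiffAt_sliceForm hB.smooth))
      (sliceDet_pos hB.oneOne.self_of_nhds hB.pos.self_of_nhds hℓ).2 i j
  · exact contDiffAt_hermMatrix
      (contDiffAt_sliceForm (contDiffAt_iddbarCn (contDiffAt_log_sliceDet hB hℓ)).neg) j i

theorem jacobian_det_ne_zero {A : Cn n →L[ℝ] Cn n}
    (hA : ∀ v, A (Complex.I • v) = Complex.I • A v) (hinj : Function.Injective A) :
    (jacobian A).det ≠ 0 := by
  have h1 : IsUnit A.toLinearMap :=
    (LinearMap.isUnit_iff_ker_eq_bot _).2 (LinearMap.ker_eq_bot.2 hinj)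
  have h2 : A.det ≠ 0 := ((LinearMap.isUnit_iff_isUnit_det _).1 h1).ne_zero
  rw [det_eq_normSq_jacobian hA] at h2
  simpa using h2

variable {P : Cn m →L[ℂ] Cn n} {μ : Cn n → Cn m} {y : Cn n}

/-- The derivative of `μ`, seen in the leaf coordinate `P`. -/
noncomputable def leafDeriv (P : Cn m →L[ℂ] Cn n) (μ : Cn n → Cn m) (z : Cn n) : Cn n →L[ℝ] Cn n :=
  (P.restrictScalars ℝ).comp (fderiv ℝ μ z)

theorem leafDeriv_I_smul (hμ : ContDiffAt ℂ ω μ y) (v : Cn n) :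
    leafDeriv P μ y (Complex.I • v) = Complex.I • leafDeriv P μ y v := by
  simp [leafDeriv, fderiv_real_I_smul (hμ.differentiableAt (by simp))]

theorem contDiffAt_det_leafDeriv (hμ : ContDiffAt ℂ ω μ y) :
    ContDiffAt ℂ ω (fun z => (jacobian (leafDeriv P μ z)).det) y := by
  have e : (fun z => (jacobian (leafDeriv P μ z)).det) =ᶠ[𝓝 y]
      fun z => (Matrix.of fun p j => P (fderiv ℂ μ z (Pi.single j 1)) p).det := by
    filter_upwards [hμ.eventually (by simp)] with z hz
    rw [jacobian]
    congr 2
    ext p j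
    rw [leafDeriv, (hz.differentiableAt (by simp)).fderiv_restrictScalars ℝ]
    rfl
  refine ContDiffAt.congr_of_eventuallyEq (contDiffAt_det fun p j => ?_) e
  have h1 : ContDiffAt ℂ ω (fderiv ℂ μ) y := hμ.fderiv_right (by simp)
  have h2 : ContDiffAt ℂ ω (fun z => P (fderiv ℂ μ z (Pi.single j 1))) y :=
    P.contDiff.contDiffAt.comp y (h1.clm_apply contDiffAt_const)
  exact contDiffAt_pi.1 h2 p

theorem pullback_eq_leaf (hy : fderiv ℝ μ y = (ℓ.restrictScalars ℝ).comp (leafDeriv P μ y)) :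
    (B (μ y)).compContinuousLinearMap (fderiv ℝ μ y) =
      (sliceForm B ℓ (μ y)).compContinuousLinearMap (leafDeriv P μ y) := by
  conv_lhs => rw [hy]
  rfl

theorem det_pullback_eq (hμ : ContDiffAt ℂ ω μ y) (hB : IsOneOne (B (μ y)))
    (hy : fderiv ℝ μ y = (ℓ.restrictScalars ℝ).comp (leafDeriv P μ y)) :
    (hermMatrix ((B (μ y)).compContinuousLinearMap (fderiv ℝ μ y))).det.re =
      Complex.normSq (jacobian (leafDeriv P μ y)).det * sliceDet B ℓ (μ y) := by
  rw [pullback_eq_leaf hy]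
  exact det_re_hermMatrix_comp (isOneOne_sliceForm hB) (leafDeriv_I_smul hμ)

/-- The scalar curvature of the pullback of `B` by a holomorphic immersion tangent to the leaves
is the scalar curvature of the leaves. -/
theorem scal_pullback_eq (hμ : ContDiffAt ℂ ω μ y) (hB : IsPositiveNear B (μ y))
    (hℓ : Function.Injective ℓ)
    (hleaf : ∀ᶠ z in 𝓝 y, fderiv ℝ μ z = (ℓ.restrictScalars ℝ).comp (leafDeriv P μ z))
    (hinj : Function.Injective (fderiv ℝ μ y))
    {η : Cn n → Cn n [⋀^Fin 2]→L[ℝ] ℝ}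
    (hη : ∀ᶠ z in 𝓝 y, η z = (B (μ z)).compContinuousLinearMap (fderiv ℝ μ z)) :
    ((hermMatrix (η y))⁻¹ *
      hermMatrix (-iddbarCn (fun z => Real.log (hermMatrix (η z)).det.re) y)).trace.re =
      sliceScal B ℓ (μ y) := by
  have hAI := leafDeriv_I_smul (P := P) hμ
  have hAinj : Function.Injective (leafDeriv P μ y) := by
    intro a b hab
    apply hinj
    rw [hleaf.self_of_nhds]
    simp [hab]
  have hdet := jacobian_det_ne_zero hAI hAinj
  have hfd := contDiffAt_det_leafDeriv (P := P) hμ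
  obtain ⟨hs1, hr1⟩ := iddbarCn_log_normSq hfd hdet
  have hL := contDiffAt_log_sliceDet hB hℓ
  have hs2 : ContDiffAt ℝ ∞ ((fun u => Real.log (sliceDet B ℓ u)) ∘ μ) y :=
    hL.comp y ((hμ.restrict_scalars ℝ).of_le (by simp))
  have e : (fun z => Real.log (hermMatrix (η z)).det.re) =ᶠ[𝓝 y]
      fun z => Real.log (Complex.normSq (jacobian (leafDeriv P μ z)).det) +
        ((fun u => Real.log (sliceDet B ℓ u)) ∘ μ) z := by
    filter_upwards [hη, hleaf, hμ.eventually (by simp),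
      hμ.continuousAt.eventually hB.oneOne, hμ.continuousAt.eventually hB.pos,
      hfd.continuousAt.eventually_ne hdet] with z h1 h2 h3 h4 h5 h6
    rw [h1, det_pullback_eq h3 h4 h2, Real.log_mul (by simpa using h6)
      (sliceDet_pos h4 h5 hℓ).1.ne']
    rfl
  have e2 : -iddbarCn (fun z => Real.log (hermMatrix (η z)).det.re) y =
      (sliceForm (fun u => -iddbarCn (fun u => Real.log (sliceDet B ℓ u)) u) ℓ
        (μ y)).compContinuousLinearMap (leafDeriv P μ y) := by
    rw [iddbarCn_congr e, iddbarCn_add hs1 hs2, hr1, zero_add, iddbarCn_comp hL hμ,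
      hleaf.self_of_nhds]
    rfl
  have ho : IsOneOne (-iddbarCn (fun u => Real.log (sliceDet B ℓ u)) (μ y)) := fun v w => by
    simpa using isOneOne_iddbarCn hL v w
  rw [hη.self_of_nhds, pullback_eq_leaf hleaf.self_of_nhds, e2, trace_hermMatrix_comp
    (isOneOne_sliceForm hB.oneOne.self_of_nhds)
    (isOneOne_sliceForm (B := fun u => -iddbarCn (fun u => Real.log (sliceDet B ℓ u)) u) ho)
    hAI hdet]
  rfl

end Slice

/-! ## Derivatives of maps between manifolds -/

section RDeriv

variable {E : Type*} [NormedAddCommGroup E] [NormedSpace ℝ E]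
  {X : Type*} [TopologicalSpace X] [ChartedSpace E X]
  {E' : Type*} [NormedAddCommGroup E'] [NormedSpace ℝ E']
  {Y : Type*} [TopologicalSpace Y] [ChartedSpace E' Y]
  {E'' : Type*} [NormedAddCommGroup E''] [NormedSpace ℝ E'']
  {Z : Type*} [TopologicalSpace Z] [ChartedSpace E'' Z]

theorem rderiv_comp {g : Y → Z} {f : X → Y} {x : X}
    (hg : MDifferentiableAt 𝓘(ℝ, E') 𝓘(ℝ, E'') g (f x))
    (hf : MDifferentiableAt 𝓘(ℝ, E) 𝓘(ℝ, E') f x) :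
    rderiv E E'' (g ∘ f) x = (rderiv E' E'' g (f x)).comp (rderiv E E' f x) :=
  mfderiv_comp x hg hf

theorem rderiv_congr {f g : X → Y} {x : X} (h : f =ᶠ[𝓝 x] g) :
    rderiv E E' f x = rderiv E E' g x := by
  have := h.mfderiv_eq (I := 𝓘(ℝ, E)) (I' := 𝓘(ℝ, E'))
  exact this

theorem rderiv_id (x : X) : rderiv E E (id : X → X) x = ContinuousLinearMap.id ℝ E :=
  mfderiv_id

theorem rderiv_eq_fderiv {f : E → E'} {x : E} : rderiv E E' f x = fderiv ℝ f x :=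
  mfderiv_eq_fderiv

theorem rderiv_injective_of_leftInverse {f : X → Y} {g : Y → X} {x : X}
    (hg : MDifferentiableAt 𝓘(ℝ, E') 𝓘(ℝ, E) g (f x))
    (hf : MDifferentiableAt 𝓘(ℝ, E) 𝓘(ℝ, E') f x) (h : ∀ᶠ x' in 𝓝 x, g (f x') = x') :
    Function.Injective (rderiv E E' f x) := by
  have h1 : rderiv E E (g ∘ f) x = ContinuousLinearMap.id ℝ E := by
    rw [← rderiv_id x]; exact rderiv_congr h
  rw [rderiv_comp hg hf] at h1
  exact Function.LeftInverse.injective (g := rderiv E' E g (f x))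
    fun v => congrArg (fun L : E →L[ℝ] E => L v) h1

end RDeriv

/-! ## Pullbacks of two-forms to vector spaces -/

section FlatPull

variable {m : ℕ} {Y : Type*} [TopologicalSpace Y] [ChartedSpace (Cn m) Y]
  {E : Type*} [NormedAddCommGroup E] [NormedSpace ℝ E]
  {E' : Type*} [NormedAddCommGroup E'] [NormedSpace ℝ E']

/-- The value of a two-form at a point, as a form on the model space. -/
def formAt (Ω : TwoForm m Y) (y : Y) : Cn m [⋀^Fin 2]→L[ℝ] ℝ := Ω y

/-- The pullback of a two-form by a map from a vector space. -/
noncomputable def flatPull (Ω : TwoForm m Y) (G : E → Y) (e : E) : E [⋀^Fin 2]→L[ℝ] ℝ :=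
  (formAt Ω (G e)).compContinuousLinearMap (rderiv E (Cn m) G e)

theorem flatPull_apply (Ω : TwoForm m Y) (G : E → Y) (e a b : E) :
    flatPull Ω G e ![a, b] = formAt Ω (G e) ![rderiv E (Cn m) G e a, rderiv E (Cn m) G e b] :=
  alt_comp_apply _ _ _ _

theorem flatPull_congr {Ω : TwoForm m Y} {G G' : E → Y} {e : E} (h : G =ᶠ[𝓝 e] G') :
    flatPull Ω G e = flatPull Ω G' e := by
  rw [flatPull, flatPull, rderiv_congr h, h.self_of_nhds]

theorem flatPull_comp {Ω : TwoForm m Y} {G : E' → Y} {k : E → E'} {e : E}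
    (hG : MDifferentiableAt 𝓘(ℝ, E') 𝓘(ℝ, Cn m) G (k e)) (hk : DifferentiableAt ℝ k e) :
    flatPull Ω (G ∘ k) e = (flatPull Ω G (k e)).compContinuousLinearMap (fderiv ℝ k e) := by
  rw [flatPull, rderiv_comp hG hk.mdifferentiableAt, rderiv_eq_fderiv]
  rfl

theorem inChart_eq_flatPull (Ω : TwoForm m Y) (p : Y) :
    inChart Ω p = flatPull Ω (chartAt (Cn m) p).symm := rfl

theorem contDiffAt_flatPull [IsManifold 𝓘(ℝ, Cn m) ∞ Y] [FiniteDimensional ℝ E] {Ω : TwoForm m Y}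
    (hΩ : ∀ p : Y, ContDiffOn ℝ ∞ (inChart Ω p) (chartAt (Cn m) p).target)
    {G : E → Y} {e : E} (hG : ContMDiffAt 𝓘(ℝ, E) 𝓘(ℝ, Cn m) ∞ G e) :
    ContDiffAt ℝ ∞ (flatPull Ω G) e := by
  set c := chartAt (Cn m) (G e)
  have hc : ContMDiffAt 𝓘(ℝ, Cn m) 𝓘(ℝ, Cn m) ∞ c (G e) :=
    contMDiffAt_of_mem_maximalAtlas (IsManifold.chart_mem_maximalAtlas _) (mem_chart_source _ _)
  have hk : ContDiffAt ℝ ∞ (c ∘ G) e := (hc.comp e hG).contDiffAt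
  have hmem : ∀ᶠ e' in 𝓝 e, G e' ∈ c.source :=
    hG.continuousAt.eventually (c.open_source.mem_nhds (mem_chart_source _ _))
  have e1 : flatPull Ω G =ᶠ[𝓝 e] fun e' =>
      (inChart Ω (G e) ((c ∘ G) e')).compContinuousLinearMap (fderiv ℝ (c ∘ G) e') := by
    filter_upwards [hmem.eventually_nhds, (hk.of_le (m := 1) (by simp)).eventually (by simp)]
      with e' h1 h2
    have : G =ᶠ[𝓝 e'] c.symm ∘ (c ∘ G) := by
      filter_upwards [h1] with e'' h using (c.left_inv h).symm
    rw [flatPull_congr this, flatPull_comp _ (h2.differentiableAt (by simp)),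
      inChart_eq_flatPull]
    exact (contMDiffOn_symm_of_mem_maximalAtlas (n := ∞) (IsManifold.chart_mem_maximalAtlas _)
      |>.contMDiffAt (c.open_target.mem_nhds (c.map_source h1.self_of_nhds))).mdifferentiableAt
      (by simp)
  refine ContDiffAt.congr_of_eventuallyEq (contDiffAt_alt_of_apply fun a b => ?_) e1
  simp only [alt_comp_apply]
  have hdk : ContDiffAt ℝ ∞ (fderiv ℝ (c ∘ G)) e := hk.fderiv_right (by simp)
  have h0 : ContDiffAt ℝ ∞ (fun e' => inChart Ω (G e) ((c ∘ G) e')) e :=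
    ContDiffAt.comp (g := inChart Ω (G e)) e ((hΩ (G e)).contDiffAt
      (c.open_target.mem_nhds (c.map_source (mem_chart_source _ _)))) hk
  exact contDiffAt_alt_apply h0 (hdk.clm_apply contDiffAt_const) (hdk.clm_apply contDiffAt_const)

variable {n : ℕ} {X : Type*} [TopologicalSpace X] [ChartedSpace (Cn n) X]
  [IsManifold 𝓘(ℝ, Cn n) ∞ X]

theorem inChart_pullback {Ω : TwoForm m Y} {j : X → Y} {p : X} {z : Cn n}
    (hz : z ∈ (chartAt (Cn n) p).target)
    (hj : MDifferentiableAt 𝓘(ℝ, Cn n) 𝓘(ℝ, Cn m) j ((chartAt (Cn n) p).symm z)) :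
    inChart (pullback j Ω) p z = flatPull Ω (j ∘ (chartAt (Cn n) p).symm) z := by
  have hs : MDifferentiableAt 𝓘(ℝ, Cn n) 𝓘(ℝ, Cn n) (chartAt (Cn n) p).symm z :=
    (contMDiffOn_symm_of_mem_maximalAtlas (n := ∞) (IsManifold.chart_mem_maximalAtlas p)
      |>.contMDiffAt ((chartAt (Cn n) p).open_target.mem_nhds hz)).mdifferentiableAt (by simp)
  rw [flatPull, rderiv_comp hj hs]
  rfl

end FlatPull

/-! ## Adapted charts of a holomorphic submersion to `ℂ` -/

section Adapted

variable {n : ℕ} {𝒳 : Type*} [TopologicalSpace 𝒳] [ChartedSpace (Cn (n + 1)) 𝒳]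

/-- A holomorphic chart whose slices are the fibres of `π`. -/
structure AdaptedChart (π : 𝒳 → ℂ) where
  /-- the chart -/
  chart : OpenPartialHomeomorph 𝒳 (Cn (n + 1))
  /-- the linear splitting -/
  split : Cn (n + 1) ≃L[ℂ] ℂ × Cn n
  /-- the coordinate on the base -/
  base : ℂ → ℂ
  mem_atlas : chart ∈ IsManifold.maximalAtlas 𝓘(ℂ, Cn (n + 1)) ω 𝒳
  split_chart : ∀ x ∈ chart.source, (split (chart x)).1 = base (π x)

theorem exists_adaptedChart {π : 𝒳 → ℂ} (hπ : IsSubmersion 𝓘(ℂ, Cn (n + 1)) 𝓘(ℂ, ℂ) ω π) (p : 𝒳) :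
    ∃ A : AdaptedChart (n := n) π, p ∈ A.chart.source := by
  obtain ⟨F, _, _, hF⟩ := hπ
  have h := hF p
  have : FiniteDimensional ℂ (ℂ × F) := LinearEquiv.finiteDimensional h.equiv.toLinearEquiv
  have : FiniteDimensional ℂ F :=
    Module.Finite.of_surjective (LinearMap.snd ℂ ℂ F) LinearMap.snd_surjective
  have hrank : Module.finrank ℂ F = Module.finrank ℂ (Cn n) := by
    have := h.equiv.toLinearEquiv.finrank_eq
    rw [Module.finrank_prod, Module.finrank_self, Module.finrank_fin_fun] at this
    rw [Module.finrank_fin_fun]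
    omega
  let i : F ≃L[ℂ] Cn n := ContinuousLinearEquiv.ofFinrankEq hrank
  refine ⟨⟨h.domChart, h.equiv.trans ((ContinuousLinearEquiv.refl ℂ ℂ).prodCongr i), h.codChart,
    h.domChart_mem_maximalAtlas, fun x hx => ?_⟩, h.mem_domChart_source⟩
  have hm : h.domChart x ∈ (h.domChart.extend 𝓘(ℂ, Cn (n + 1))).target := by
    simpa using h.domChart.map_source hx
  have := h.writtenInCharts hm
  simp only [Function.comp_apply, OpenPartialHomeomorph.extend,
    modelWithCornersSelf_partialEquiv, PartialEquiv.trans_refl,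
    OpenPartialHomeomorph.toFun_eq_coe, OpenPartialHomeomorph.coe_toPartialEquiv_symm,
    h.domChart.left_inv hx] at this
  simpa using this.symm

namespace AdaptedChart

variable {π : 𝒳 → ℂ} (A : AdaptedChart (n := n) π)

/-- The projection to the leaf coordinate. -/
noncomputable def proj : Cn (n + 1) →L[ℂ] Cn n :=
  (ContinuousLinearMap.snd ℂ ℂ (Cn n)).comp (A.split : Cn (n + 1) →L[ℂ] ℂ × Cn n)

/-- The inclusion of the leaf direction. -/
noncomputable def incl : Cn n →L[ℂ] Cn (n + 1) :=
  (A.split.symm : ℂ × Cn n →L[ℂ] Cn (n + 1)).comp (ContinuousLinearMap.inr ℂ ℂ (Cn n))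

theorem incl_injective : Function.Injective A.incl := fun a b h => by
  have := A.split.symm.injective h
  simpa using this

theorem incl_proj {v : Cn (n + 1)} (hv : (A.split v).1 = 0) : A.incl (A.proj v) = v := by
  apply A.split.injective
  simp only [incl, proj, ContinuousLinearMap.comp_apply, ContinuousLinearEquiv.coe_coe,
    ContinuousLinearEquiv.apply_symm_apply]
  ext <;> simp [hv]

end AdaptedChart

end Adapted

/-! ## The fibrewise geometry of a Kähler form -/

section Fibre

variable {n : ℕ} {𝒳 : Type*} [TopologicalSpace 𝒳] [ChartedSpace (Cn (n + 1)) 𝒳]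
  {π : 𝒳 → ℂ} {Ω : TwoForm (n + 1) 𝒳}

theorem IsKahlerForm.formAt_oneOne {m : ℕ} {Y : Type*} [TopologicalSpace Y] [ChartedSpace (Cn m) Y]
    {Ω : TwoForm m Y} (hΩ : IsKahlerForm Ω) (x : Y) : IsOneOne (formAt Ω x) :=
  fun v w => hΩ.invariant x v w

theorem IsKahlerForm.formAt_pos {m : ℕ} {Y : Type*} [TopologicalSpace Y] [ChartedSpace (Cn m) Y]
    {Ω : TwoForm m Y} (hΩ : IsKahlerForm Ω) (x : Y) (v : Cn m) (hv : v ≠ 0) :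
    0 < formAt Ω x ![v, Complex.I • v] :=
  hΩ.pos x v hv

variable (n) in
/-- The data of a holomorphic immersion onto (part of) the fibre of `π` over `s`. -/
structure IsFibreMap (π : 𝒳 → ℂ) {Y : Type*} [TopologicalSpace Y] [ChartedSpace (Cn n) Y]
    (j : Y → 𝒳) (s : ℂ) : Prop where
  holo : ContMDiff 𝓘(ℂ, Cn n) 𝓘(ℂ, Cn (n + 1)) ω j
  imm : ∀ y, Function.Injective (rderiv (Cn n) (Cn (n + 1)) j y)
  fib : ∀ y, π (j y) = s

namespace AdaptedChart

variable (A : AdaptedChart (n := n) π)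

/-- The Kähler form in the adapted chart. -/
noncomputable def form (Ω : TwoForm (n + 1) 𝒳) : Cn (n + 1) → Cn (n + 1) [⋀^Fin 2]→L[ℝ] ℝ :=
  flatPull Ω A.chart.symm

theorem contMDiffAt_symm {u : Cn (n + 1)} (hu : u ∈ A.chart.target) :
    ContMDiffAt 𝓘(ℂ, Cn (n + 1)) 𝓘(ℂ, Cn (n + 1)) ω A.chart.symm u :=
  (contMDiffOn_symm_of_mem_maximalAtlas A.mem_atlas).contMDiffAt (A.chart.open_target.mem_nhds hu)

theorem contMDiffAt_chart {x : 𝒳} (hx : x ∈ A.chart.source) :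
    ContMDiffAt 𝓘(ℂ, Cn (n + 1)) 𝓘(ℂ, Cn (n + 1)) ω A.chart x :=
  contMDiffAt_of_mem_maximalAtlas A.mem_atlas hx

theorem rderiv_symm_injective {u : Cn (n + 1)} (hu : u ∈ A.chart.target) :
    Function.Injective (rderiv (Cn (n + 1)) (Cn (n + 1)) A.chart.symm u) := by
  refine rderiv_injective_of_leftInverse (g := A.chart)
    ((contMDiffAt_real (A.contMDiffAt_chart (A.chart.map_target hu))).mdifferentiableAt (by simp))
    ((contMDiffAt_real (A.contMDiffAt_symm hu)).mdifferentiableAt (by simp)) ?_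
  filter_upwards [A.chart.open_target.mem_nhds hu] with v hv using A.chart.right_inv hv

variable [IsManifold 𝓘(ℂ, Cn (n + 1)) ω 𝒳]

theorem isPositiveNear_form (hΩ : IsKahlerForm Ω) {u : Cn (n + 1)} (hu : u ∈ A.chart.target) :
    IsPositiveNear (A.form Ω) u := by
  have := isManifold_real (E := Cn (n + 1)) (X := 𝒳)
  have hI : ∀ v ∈ A.chart.target, ∀ w, rderiv (Cn (n + 1)) (Cn (n + 1)) A.chart.symm v
      (Complex.I • w) = Complex.I • rderiv (Cn (n + 1)) (Cn (n + 1)) A.chart.symm v w :=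
    fun v hv => rderiv_I_smul ((A.contMDiffAt_symm hv).mdifferentiableAt (by simp))
  refine ⟨contDiffAt_flatPull hΩ.smooth (contMDiffAt_real (A.contMDiffAt_symm hu)), ?_, ?_⟩
  · filter_upwards [A.chart.open_target.mem_nhds hu] with v hv
    exact isOneOne_comp (hΩ.formAt_oneOne _) (hI v hv)
  · filter_upwards [A.chart.open_target.mem_nhds hu] with v hv w hw
    rw [form, flatPull_apply, hI v hv]
    refine hΩ.formAt_pos _ _ fun h => hw (A.rderiv_symm_injective hv ?_)
    rw [h, map_zero]

/-- The scalar curvature of the fibres, computed in the adapted chart. -/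
noncomputable def scal (Ω : TwoForm (n + 1) 𝒳) (x : 𝒳) : ℝ :=
  sliceScal (A.form Ω) A.incl (A.chart x)

theorem contMDiffAt_scal (hΩ : IsKahlerForm Ω) {x : 𝒳} (hx : x ∈ A.chart.source) :
    ContMDiffAt 𝓘(ℝ, Cn (n + 1)) 𝓘(ℝ, ℝ) ∞ (A.scal Ω) x :=
  (contDiffAt_sliceScal (A.isPositiveNear_form hΩ (A.chart.map_source hx))
    A.incl_injective).contMDiffAt.comp x (contMDiffAt_real (A.contMDiffAt_chart hx))

section Map

variable {Y : Type*} [TopologicalSpace Y] [ChartedSpace (Cn n) Y] [IsManifold 𝓘(ℂ, Cn n) ω Y]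
  {j : Y → 𝒳} {s : ℂ}

/-- The expression of `j` in the preferred chart at `p` and the adapted chart. -/
noncomputable def expr (j : Y → 𝒳) (p : Y) : Cn n → Cn (n + 1) :=
  A.chart ∘ j ∘ (chartAt (Cn n) p).symm

theorem contDiffAt_expr (hj : IsFibreMap n π j s) {p : Y} {z : Cn n}
    (hz : z ∈ (chartAt (Cn n) p).target) (hjz : j ((chartAt (Cn n) p).symm z) ∈ A.chart.source) :
    ContDiffAt ℂ ω (A.expr j p) z := by
  have h1 : ContMDiffAt 𝓘(ℂ, Cn n) 𝓘(ℂ, Cn n) ω (chartAt (Cn n) p).symm z :=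
    (contMDiffOn_symm_of_mem_maximalAtlas (IsManifold.chart_mem_maximalAtlas p)).contMDiffAt
      ((chartAt (Cn n) p).open_target.mem_nhds hz)
  have h2 := (hj.holo _).comp z h1
  exact ((A.contMDiffAt_chart hjz).comp z h2).contDiffAt

theorem eventually_mem (hj : IsFibreMap n π j s) {p : Y} {z : Cn n}
    (hz : z ∈ (chartAt (Cn n) p).target) (hjz : j ((chartAt (Cn n) p).symm z) ∈ A.chart.source) :
    ∀ᶠ z' in 𝓝 z, z' ∈ (chartAt (Cn n) p).target ∧
      j ((chartAt (Cn n) p).symm z') ∈ A.chart.source :=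
  ((chartAt (Cn n) p).open_target.eventually_mem hz).and
    (((hj.holo.continuous.continuousAt.comp ((chartAt (Cn n) p).continuousAt_symm hz))).eventually
      (A.chart.open_source.eventually_mem hjz))

theorem fderiv_expr (hj : IsFibreMap n π j s) {p : Y} {z : Cn n}
    (hz : z ∈ (chartAt (Cn n) p).target) (hjz : j ((chartAt (Cn n) p).symm z) ∈ A.chart.source) :
    fderiv ℝ (A.expr j p) z = (A.incl.restrictScalars ℝ).comp (leafDeriv A.proj (A.expr j p) z) := by
  have hd : DifferentiableAt ℝ (A.expr j p) z :=
    ((A.contDiffAt_expr hj hz hjz).restrict_scalars ℝ).differentiableAt (by simp)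
  let L : Cn (n + 1) →L[ℝ] ℂ := ((ContinuousLinearMap.fst ℂ ℂ (Cn n)).comp
    (A.split : Cn (n + 1) →L[ℂ] ℂ × Cn n)).restrictScalars ℝ
  have h1 : (fun z => L (A.expr j p z)) =ᶠ[𝓝 z] fun _ => A.base s := by
    filter_upwards [A.eventually_mem hj hz hjz] with z' hz'
    have := A.split_chart _ hz'.2
    rw [hj.fib] at this
    exact this
  have h2 : L.comp (fderiv ℝ (A.expr j p) z) = 0 :=
    ((L.hasFDerivAt.comp z hd.hasFDerivAt).congr_of_eventuallyEq h1.symm).unique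
      (hasFDerivAt_const _ _)
  ext1 v
  have h3 : (A.split (fderiv ℝ (A.expr j p) z v)).1 = 0 :=
    congrArg (fun T : Cn n →L[ℝ] ℂ => T v) h2
  exact (A.incl_proj h3).symm

theorem inChart_pullback_eq (hj : IsFibreMap n π j s) {p : Y} {z : Cn n}
    (hz : z ∈ (chartAt (Cn n) p).target) (hjz : j ((chartAt (Cn n) p).symm z) ∈ A.chart.source) :
    inChart (pullback j Ω) p z =
      (A.form Ω (A.expr j p z)).compContinuousLinearMap (fderiv ℝ (A.expr j p) z) := by
  have := isManifold_real (E := Cn n) (X := Y)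
  rw [inChart_pullback hz ((contMDiffAt_real (hj.holo _)).mdifferentiableAt (by simp))]
  have e : j ∘ (chartAt (Cn n) p).symm =ᶠ[𝓝 z] A.chart.symm ∘ A.expr j p := by
    filter_upwards [A.eventually_mem hj hz hjz] with z' hz'
    exact (A.chart.left_inv hz'.2).symm
  rw [flatPull_congr e, flatPull_comp _
    (((A.contDiffAt_expr hj hz hjz).restrict_scalars ℝ).differentiableAt (by simp))]
  · rfl
  · exact (contMDiffAt_real (A.contMDiffAt_symm (A.chart.map_source hjz))).mdifferentiableAt
      (by simp)

theorem fderiv_expr_injective (hj : IsFibreMap n π j s) {p : Y} {z : Cn n}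
    (hz : z ∈ (chartAt (Cn n) p).target) (hjz : j ((chartAt (Cn n) p).symm z) ∈ A.chart.source) :
    Function.Injective (fderiv ℝ (A.expr j p) z) := by
  have := isManifold_real (E := Cn n) (X := Y)
  set c := chartAt (Cn n) p
  have hc : MDifferentiableAt 𝓘(ℝ, Cn n) 𝓘(ℝ, Cn n) c.symm z :=
    (contMDiffOn_symm_of_mem_maximalAtlas (n := ∞) (IsManifold.chart_mem_maximalAtlas p)
      |>.contMDiffAt (c.open_target.mem_nhds hz)).mdifferentiableAt (by simp)
  have hc' : MDifferentiableAt 𝓘(ℝ, Cn n) 𝓘(ℝ, Cn n) c (c.symm z) :=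
    (contMDiffAt_of_mem_maximalAtlas (n := ∞) (IsManifold.chart_mem_maximalAtlas p)
      (c.map_target hz)).mdifferentiableAt (by simp)
  have h1 : Function.Injective (rderiv (Cn n) (Cn n) c.symm z) :=
    rderiv_injective_of_leftInverse hc' hc
      (by filter_upwards [c.open_target.mem_nhds hz] with v hv using c.right_inv hv)
  have hjd : MDifferentiableAt 𝓘(ℝ, Cn n) 𝓘(ℝ, Cn (n + 1)) j (c.symm z) :=
    (contMDiffAt_real (hj.holo _)).mdifferentiableAt (by simp)
  have h2 : Function.Injective (rderiv (Cn n) (Cn (n + 1)) (j ∘ c.symm) z) := by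
    rw [rderiv_comp hjd hc]
    exact (hj.imm _).comp h1
  have e : j ∘ c.symm =ᶠ[𝓝 z] A.chart.symm ∘ A.expr j p := by
    filter_upwards [A.eventually_mem hj hz hjz] with z' hz'
    exact (A.chart.left_inv hz'.2).symm
  have hd : DifferentiableAt ℝ (A.expr j p) z :=
    ((A.contDiffAt_expr hj hz hjz).restrict_scalars ℝ).differentiableAt (by simp)
  have hs : MDifferentiableAt 𝓘(ℝ, Cn (n + 1)) 𝓘(ℝ, Cn (n + 1)) A.chart.symm (A.expr j p z) :=
    (contMDiffAt_real (A.contMDiffAt_symm (A.chart.map_source hjz))).mdifferentiableAt (by simp)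
  rw [rderiv_congr e, rderiv_comp hs hd.mdifferentiableAt, rderiv_eq_fderiv] at h2
  exact Function.Injective.of_comp h2

theorem scalarCurvature_pullback (hΩ : IsKahlerForm Ω) (hj : IsFibreMap n π j s) {y : Y}
    (hy : j y ∈ A.chart.source) : scalarCurvature (n := n) (pullback j Ω) y = A.scal Ω (j y) := by
  set c := chartAt (Cn n) y with hcdef
  have hz : c y ∈ c.target := mem_chart_target _ _
  have hcy : c.symm (c y) = y := c.left_inv (mem_chart_source _ _)
  have hjz : j (c.symm (c y)) ∈ A.chart.source := by rw [hcy]; exact hy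
  have hμ : A.expr j y (c y) = A.chart (j y) := by
    rw [expr, Function.comp_apply, Function.comp_apply, hcy]
  have := scal_pullback_eq (A.contDiffAt_expr hj hz hjz)
    (hμ ▸ A.isPositiveNear_form hΩ (A.chart.map_source hy)) A.incl_injective (P := A.proj)
    (by filter_upwards [A.eventually_mem hj hz hjz] with z h using A.fderiv_expr hj h.1 h.2)
    (A.fderiv_expr_injective hj hz hjz)
    (η := inChart (pullback j Ω) y)
    (by filter_upwards [A.eventually_mem hj hz hjz] with z h using A.inChart_pullback_eq hj h.1 h.2)
  rw [hμ] at this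
  exact this

theorem volDensity_pullback (hΩ : IsKahlerForm Ω) (hj : IsFibreMap n π j s) {p : Y} {z : Cn n}
    (hz : z ∈ (chartAt (Cn n) p).target) (hjz : j ((chartAt (Cn n) p).symm z) ∈ A.chart.source) :
    volDensity (pullback j Ω) p z = |(leafDeriv A.proj (A.expr j p) z).det| *
      sliceDet (A.form Ω) A.incl (A.expr j p z) := by
  have hμ := A.contDiffAt_expr hj hz hjz
  rw [volDensity, A.inChart_pullback_eq hj hz hjz, det_pullback_eq hμ
    (A.isPositiveNear_form hΩ (A.chart.map_source hjz)).oneOne.self_of_nhds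
    (A.fderiv_expr hj hz hjz), det_eq_normSq_jacobian (leafDeriv_I_smul hμ),
    abs_of_nonneg (Complex.normSq_nonneg _)]

end Map

end AdaptedChart

end Fibre

/-! ## Volume estimates -/

section Volume

theorem measurableSet_chart_image {Y H : Type*} [TopologicalSpace Y] [MeasurableSpace Y]
    [BorelSpace Y] [TopologicalSpace H] [MeasurableSpace H] [BorelSpace H]
    (c : OpenPartialHomeomorph Y H) {T : Set Y} (hT : MeasurableSet T) (hTc : T ⊆ c.source) :
    MeasurableSet (c '' T) := by
  have hcont : Measurable (c.target.domRestrict c.symm) := c.continuousOn_symm.domRestrict.measurable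
  have : c '' T = (↑) '' (c.target.domRestrict c.symm ⁻¹' T) := by
    ext z
    constructor
    · rintro ⟨y, hy, rfl⟩
      exact ⟨⟨c y, c.map_source (hTc hy)⟩, by
        rw [mem_preimage, Set.domRestrict_apply, c.left_inv (hTc hy)]
        exact hy, rfl⟩
    · rintro ⟨⟨z, hz⟩, hz', rfl⟩
      exact ⟨c.symm z, hz', c.right_inv hz⟩
  rw [this]
  exact c.open_target.measurableSet.subtype_image (hcont hT)

theorem symm_preimage_inter_image {Y H : Type*} [TopologicalSpace Y] [TopologicalSpace H]
    (c : OpenPartialHomeomorph Y H) (N : Set Y) {D : Set Y} (hD : D ⊆ c.source) :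
    c.symm ⁻¹' N ∩ c '' D = c '' (N ∩ D) := by
  ext z
  constructor
  · rintro ⟨h1, y, hy, rfl⟩
    rw [mem_preimage, c.left_inv (hD hy)] at h1
    exact ⟨y, ⟨h1, hy⟩, rfl⟩
  · rintro ⟨y, ⟨h1, hy⟩, rfl⟩
    exact ⟨by rwa [mem_preimage, c.left_inv (hD hy)], y, hy, rfl⟩

variable {n : ℕ} {𝒳 : Type*} [TopologicalSpace 𝒳] [ChartedSpace (Cn (n + 1)) 𝒳]
  [IsManifold 𝓘(ℂ, Cn (n + 1)) ω 𝒳] {π : 𝒳 → ℂ} {Ω : TwoForm (n + 1) 𝒳}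
  {Y : Type*} [TopologicalSpace Y] [ChartedSpace (Cn n) Y] [IsManifold 𝓘(ℂ, Cn n) ω Y]
  [MeasurableSpace Y] [BorelSpace Y] {j : Y → 𝒳} {s : ℂ}

namespace AdaptedChart

variable (A : AdaptedChart (n := n) π)

theorem injOn_proj_chart (hj : IsFibreMap n π j s) (hinj : Function.Injective j) :
    InjOn (fun y => A.proj (A.chart (j y))) (j ⁻¹' A.chart.source) := by
  intro a ha b hb hab
  refine hinj (A.chart.injOn ha hb (A.split.injective (Prod.ext ?_ hab)))
  rw [A.split_chart _ ha, A.split_chart _ hb, hj.fib, hj.fib]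

theorem kahlerVolume_preimage_le (hΩ : IsKahlerForm Ω) (hj : IsFibreMap n π j s)
    (hinj : Function.Injective j) {N : Set 𝒳} (hN : IsOpen N) (hNs : N ⊆ A.chart.source) {C : ℝ}
    (hC : ∀ x ∈ N, sliceDet (A.form Ω) A.incl (A.chart x) ≤ C) :
    kahlerVolume (n := n) (pullback j Ω) (j ⁻¹' N) ≤
      ENNReal.ofReal C * volume (A.proj '' (A.chart '' N)) := by
  classical
  have hNm : MeasurableSet (j ⁻¹' N) := (hN.preimage hj.holo.continuous).measurableSet
  rw [kahlerVolume]
  split_ifs with h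
  swap
  · simp
  set c : ℕ → OpenPartialHomeomorph Y (Cn n) := fun k => chartAt (Cn n) (h.choose k)
  set D : ℕ → Set Y := disjointed fun k => (c k).source
  have hDs : ∀ k, D k ⊆ (c k).source := fun k => disjointed_subset _ k
  have hDm : ∀ k, MeasurableSet (D k) := fun k =>
    MeasurableSet.disjointed (fun k => (c k).open_source.measurableSet) k
  have hDd : Pairwise (Function.onFun Disjoint D) := disjoint_disjointed _
  let κ : Y → Cn n := fun y => A.proj (A.chart (j y))
  have hκ : InjOn κ (j ⁻¹' N) := (A.injOn_proj_chart hj hinj).mono (preimage_mono hNs)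
  let S : ℕ → Set (Cn n) := fun k => c k '' (j ⁻¹' N ∩ D k)
  let g : ℕ → Cn n → Cn n := fun k z => A.proj (A.expr j (h.choose k) z)
  have hSm : ∀ k, MeasurableSet (S k) := fun k =>
    measurableSet_chart_image (c k) (hNm.inter (hDm k)) (inter_subset_right.trans (hDs k))
  have hS : ∀ k, ∀ z ∈ S k, z ∈ (c k).target ∧ j ((c k).symm z) ∈ N := by
    rintro k _ ⟨y, ⟨hy1, hy2⟩, rfl⟩
    refine ⟨(c k).map_source (hDs k hy2), ?_⟩
    rw [(c k).left_inv (hDs k hy2)]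
    exact hy1
  have hg : ∀ k, ∀ y ∈ D k, g k (c k y) = κ y := by
    intro k y hy
    have : (c k).symm (c k y) = y := (c k).left_inv (hDs k hy)
    change A.proj (A.chart (j ((c k).symm (c k y)))) = _
    rw [this]
  have hgS : ∀ k, g k '' S k = κ '' (j ⁻¹' N ∩ D k) := by
    intro k
    rw [image_image]
    exact image_congr fun y hy => hg k y hy.2
  have hgi : ∀ k, InjOn (g k) (S k) := by
    rintro k _ ⟨a, ha, rfl⟩ _ ⟨b, hb, rfl⟩ hab
    rw [hg k a ha.2, hg k b hb.2] at hab
    rw [hκ ha.1 hb.1 hab]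
  have hgd : ∀ k, ∀ z ∈ S k, HasFDerivWithinAt (g k)
      (leafDeriv A.proj (A.expr j (h.choose k)) z) (S k) z := by
    intro k z hz
    have hd : DifferentiableAt ℝ (A.expr j (h.choose k)) z :=
      ((A.contDiffAt_expr hj (hS k z hz).1 (hNs (hS k z hz).2)).restrict_scalars
        ℝ).differentiableAt (by simp)
    exact ((A.proj.restrictScalars ℝ).hasFDerivAt.comp z hd.hasFDerivAt).hasFDerivWithinAt
  have hterm : ∀ k, ((volume.restrict (c k '' D k)).withDensity
      fun y => ENNReal.ofReal (volDensity (pullback j Ω) (h.choose k) y)).map (c k).symm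
        (j ⁻¹' N) ≤ ENNReal.ofReal C * volume (κ '' (j ⁻¹' N ∩ D k)) := by
    intro k
    by_cases hm : AEMeasurable (c k).symm ((volume.restrict (c k '' D k)).withDensity
      fun y => ENNReal.ofReal (volDensity (pullback j Ω) (h.choose k) y))
    swap
    · rw [Measure.map_of_not_aemeasurable hm]
      simp
    rw [Measure.map_apply_of_aemeasurable hm hNm, withDensity_apply', Measure.restrict_restrict'
      (measurableSet_chart_image (c k) (hDm k) (hDs k)), symm_preimage_inter_image _ _ (hDs k),
      ← hgS, ← lintegral_abs_det_fderiv_eq_addHaar_image volume (hSm k) (hgd k) (hgi k),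
      ← lintegral_const_mul' _ _ ENNReal.ofReal_ne_top]
    refine setLIntegral_mono' (hSm k) fun z hz => ?_
    rw [A.volDensity_pullback hΩ hj (hS k z hz).1 (hNs (hS k z hz).2), mul_comm,
      ENNReal.ofReal_mul' (abs_nonneg _)]
    gcongr
    exact hC _ (hS k z hz).2
  rw [Measure.sum_apply _ hNm]
  refine (ENNReal.tsum_le_tsum hterm).trans ?_
  rw [ENNReal.tsum_mul_left]
  gcongr
  rw [← measure_iUnion]
  · refine measure_mono (iUnion_subset fun k => ?_)
    rintro _ ⟨y, hy, rfl⟩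
    exact ⟨_, ⟨_, hy.1, rfl⟩, rfl⟩
  · intro k l hkl
    refine disjoint_left.2 ?_
    rintro _ ⟨a, ha, rfl⟩ ⟨b, hb, hab⟩
    rw [hκ hb.1 ha.1 hab] at hb
    exact disjoint_left.1 (hDd hkl) ha.2 hb.2
  · intro k
    rw [← hgS]
    exact (hSm k).image_of_continuousOn_injOn
      (fun z hz => (hgd k z hz).continuousWithinAt) (hgi k)

end AdaptedChart

/-- The volumes of the fibres over a compact set are bounded near each point. -/
theorem exists_open_volume_bound (hΩ : IsKahlerForm Ω)
    (hπ : IsSubmersion 𝓘(ℂ, Cn (n + 1)) 𝓘(ℂ, ℂ) ω π) (p : 𝒳) :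
    ∃ (A : AdaptedChart (n := n) π) (N : Set 𝒳) (C : ℝ), IsOpen N ∧ p ∈ N ∧ N ⊆ A.chart.source ∧
      (∀ x ∈ N, sliceDet (A.form Ω) A.incl (A.chart x) ≤ C) ∧
      volume (A.proj '' (A.chart '' N)) < ⊤ := by
  obtain ⟨A, hp⟩ := exists_adaptedChart hπ p
  have hc : ContinuousAt (fun x => sliceDet (A.form Ω) A.incl (A.chart x)) p :=
    (contDiffAt_sliceDet (A.isPositiveNear_form hΩ
      (A.chart.map_source hp)).smooth).continuousAt.comp (A.chart.continuousAt hp)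
  have h1 := hc.eventually (gt_mem_nhds (lt_add_one _))
  have h2 := ((A.proj.continuous.continuousAt.comp (A.chart.continuousAt hp))).eventually
    (Metric.ball_mem_nhds _ one_pos)
  obtain ⟨N, hN, hNo, hpN⟩ := mem_nhds_iff.1
    ((h1.and h2).and (A.chart.open_source.eventually_mem hp))
  refine ⟨A, N, _, hNo, hpN, fun x hx => (hN hx).2, fun x hx => (hN hx).1.1.le, ?_⟩
  refine (measure_mono ?_).trans_lt
    (measure_ball_lt_top (μ := (volume : Measure (Cn n))) (x := A.proj (A.chart p)) (r := 1))
  rintro _ ⟨_, ⟨x, hx, rfl⟩, rfl⟩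
  exact (hN hx).1.2

theorem exists_volume_cover (hΩ : IsKahlerForm Ω)
    (hπ : IsSubmersion 𝓘(ℂ, Cn (n + 1)) 𝓘(ℂ, ℂ) ω π) {K : Set 𝒳} (hK : IsCompact K) :
    ∃ V : ℝ, 0 ≤ V ∧ ∀ (j : Y → 𝒳) (s : ℂ), IsFibreMap n π j s → Function.Injective j →
      (∀ y, j y ∈ K) → kahlerVolume (n := n) (pullback j Ω) univ ≤ ENNReal.ofReal V := by
  choose A N C hN hp hNs hC hV using exists_open_volume_bound (Ω := Ω) hΩ hπ
  obtain ⟨t, ht⟩ := hK.elim_finite_subcover N hN fun x _ => mem_iUnion.2 ⟨x, hp x⟩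
  let b : 𝒳 → ENNReal := fun p =>
    ENNReal.ofReal (C p) * volume ((A p).proj '' ((A p).chart '' N p))
  have hb : ∑ p ∈ t, b p ≠ ⊤ :=
    ENNReal.sum_ne_top.2 fun p _ => ENNReal.mul_ne_top ENNReal.ofReal_ne_top (hV p).ne
  refine ⟨(∑ p ∈ t, b p).toReal, ENNReal.toReal_nonneg, fun j s hj hinj hjK => ?_⟩
  rw [ENNReal.ofReal_toReal hb]
  have hcov : (univ : Set Y) ⊆ ⋃ p ∈ t, j ⁻¹' N p := by
    intro y _
    have := ht (hjK y)
    simpa using this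
  refine (measure_mono hcov).trans ((measure_biUnion_finset_le _ _).trans ?_)
  exact Finset.sum_le_sum fun p _ =>
    (A p).kahlerVolume_preimage_le hΩ hj hinj (hN p) (hNs p) (hC p)

end Volume

/-! ## Oscillation estimates on connected compact manifolds -/

section Oscillation

variable {E : Type*} [NormedAddCommGroup E] [NormedSpace ℝ E]
  {X : Type*} [TopologicalSpace X] [ChartedSpace E X]

theorem exists_local_osc_bound [IsManifold 𝓘(ℝ, E) ∞ X] {ι : Type*} {u : ι → X → ℝ} {ε : ι → ℝ}
    (hu : ∀ i, MDifferentiable 𝓘(ℝ, E) 𝓘(ℝ, ℝ) (u i)) (a : X)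
    (h : ∃ C, ∀ᶠ z in 𝓝 (chartAt E a a), ∀ i,
      ‖fderiv ℝ (u i ∘ (chartAt E a).symm) z‖ ≤ C * ε i) :
    ∃ U, IsOpen U ∧ a ∈ U ∧ ∃ C, ∀ x ∈ U, ∀ i, |u i x - u i a| ≤ C * ε i := by
  obtain ⟨C, hC⟩ := h
  set c := chartAt E a
  obtain ⟨r, hr, hb⟩ := Metric.eventually_nhds_iff_ball.1
    (hC.and (c.open_target.eventually_mem (mem_chart_target E a)))
  refine ⟨c.source ∩ c ⁻¹' Metric.ball (c a) r, c.isOpen_inter_preimage Metric.isOpen_ball,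
    ⟨mem_chart_source _ _, Metric.mem_ball_self hr⟩, C * r, fun x hx i => ?_⟩
  have hd : ∀ z ∈ Metric.ball (c a) r, DifferentiableAt ℝ (u i ∘ c.symm) z := by
    intro z hz
    have h1 : MDifferentiableAt 𝓘(ℝ, E) 𝓘(ℝ, E) c.symm z :=
      (contMDiffOn_symm_of_mem_maximalAtlas (n := ∞) (IsManifold.chart_mem_maximalAtlas a)
        |>.contMDiffAt (c.open_target.mem_nhds (hb z hz).2)).mdifferentiableAt (by simp)
    exact ((hu i _).comp z h1).differentiableAt
  have := (convex_ball (c a) r).norm_image_sub_le_of_norm_fderiv_le hd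
    (fun z hz => (hb z hz).1 i) (Metric.mem_ball_self hr) hx.2
  have h0 : 0 ≤ C * ε i := (norm_nonneg _).trans ((hb _ (Metric.mem_ball_self hr)).1 i)
  rw [Function.comp_apply, Function.comp_apply, c.left_inv hx.1,
    c.left_inv (mem_chart_source _ _), Real.norm_eq_abs] at this
  have h2 : ‖c x - c a‖ ≤ r := by
    have := hx.2
    rw [mem_preimage, Metric.mem_ball, dist_eq_norm] at this
    exact this.le
  nlinarith

/-- Functions on a connected compact manifold with uniformly small derivatives have uniformly
small oscillation. -/
theorem exists_osc_bound [IsManifold 𝓘(ℝ, E) ∞ X] [CompactSpace X] [PreconnectedSpace X]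
    {ι : Type*} {u : ι → X → ℝ} {ε : ι → ℝ} (hε : ∀ i, 0 ≤ ε i)
    (hu : ∀ i, MDifferentiable 𝓘(ℝ, E) 𝓘(ℝ, ℝ) (u i))
    (h : ∀ a : X, ∃ C, ∀ᶠ z in 𝓝 (chartAt E a a), ∀ i,
      ‖fderiv ℝ (u i ∘ (chartAt E a).symm) z‖ ≤ C * ε i) (x₀ : X) :
    ∃ C, ∀ i x, |u i x - u i x₀| ≤ C * ε i := by
  choose U hU ha C hC using fun a => exists_local_osc_bound hu a (h a)
  let T : Set X := {x | ∃ K, ∀ i, |u i x - u i x₀| ≤ K * ε i}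
  have key : ∀ a, ∀ x ∈ U a, (x ∈ T ↔ a ∈ T) := by
    intro a x hx
    constructor
    · rintro ⟨K, hK⟩
      refine ⟨K + C a, fun i => ?_⟩
      have h1 := hK i
      have h2 := hC a x hx i
      rw [abs_le] at *
      constructor <;> linarith
    · rintro ⟨K, hK⟩
      refine ⟨K + C a, fun i => ?_⟩
      have h1 := hK i
      have h2 := hC a x hx i
      rw [abs_le] at *
      constructor <;> linarith
  have hT : IsClopen T := by
    refine ⟨⟨isOpen_iff_mem_nhds.2 fun a haT => ?_⟩, isOpen_iff_mem_nhds.2 fun a haT => ?_⟩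
    · filter_upwards [(hU a).mem_nhds (ha a)] with x hx hxT using haT ((key a x hx).1 hxT)
    · filter_upwards [(hU a).mem_nhds (ha a)] with x hx using (key a x hx).2 haT
  have hTu : T = univ := hT.eq_univ ⟨x₀, 0, fun i => by simp⟩
  have hTm : ∀ a, ∃ K, ∀ i, |u i a - u i x₀| ≤ K * ε i := fun a => by
    have : a ∈ T := hTu ▸ mem_univ a
    exact this
  choose K hK using hTm
  obtain ⟨t, ht⟩ := isCompact_univ.elim_finite_subcover U hU fun x _ => mem_iUnion.2 ⟨x, ha x⟩
  refine ⟨∑ a ∈ t, (|K a| + |C a|), fun i x => ?_⟩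
  obtain ⟨a, hat, hxa⟩ := mem_iUnion₂.1 (ht (mem_univ x))
  have h1 := hK a i
  have h2 := hC a x hxa i
  have h3 : |K a| + |C a| ≤ ∑ a ∈ t, (|K a| + |C a|) :=
    Finset.single_le_sum (f := fun a => |K a| + |C a|) (fun b _ => by positivity) hat
  have h4 : |u i x - u i x₀| ≤ (K a + C a) * ε i := by
    rw [abs_le] at *
    constructor <;> linarith
  refine h4.trans (mul_le_mul_of_nonneg_right (le_trans ?_ h3) (hε i))
  exact add_le_add (le_abs_self _) (le_abs_self _)

theorem eq_of_rderiv_eq_zero [IsManifold 𝓘(ℝ, E) ∞ X] [CompactSpace X] [PreconnectedSpace X]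
    {u : X → ℝ} (hu : MDifferentiable 𝓘(ℝ, E) 𝓘(ℝ, ℝ) u) (h : ∀ x, rderiv E ℝ u x = 0) (x y : X) :
    u x = u y := by
  obtain ⟨C, hC⟩ := exists_osc_bound (ι := Unit) (u := fun _ => u) (ε := fun _ => 0)
    (fun _ => le_rfl) (fun _ => hu) (fun a => ⟨0, by
      set c := chartAt E a
      filter_upwards [c.open_target.mem_nhds (mem_chart_target E a)] with z hz _
      have h1 : MDifferentiableAt 𝓘(ℝ, E) 𝓘(ℝ, E) c.symm z :=
        (contMDiffOn_symm_of_mem_maximalAtlas (n := ∞) (IsManifold.chart_mem_maximalAtlas a)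
          |>.contMDiffAt (c.open_target.mem_nhds hz)).mdifferentiableAt (by simp)
      rw [← rderiv_eq_fderiv, rderiv_comp (hu _) h1, h]
      simp⟩) y
  have := hC () x
  rw [mul_zero] at this
  exact sub_eq_zero.1 (abs_nonpos_iff.1 this)

end Oscillation

/-! ## Killing potentials and the reduced scalar curvature -/

section Killing

variable {n : ℕ} {X : Type*} [TopologicalSpace X] [ChartedSpace (Cn n) X]
  (EG : Type*) [NormedAddCommGroup EG] [NormedSpace ℝ EG]
  (G : Type*) [TopologicalSpace G] [ChartedSpace EG G] [Group G] [MulAction G X]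

variable {G} in
/-- The vector field generated by `ξ`, with values in the model space. -/
noncomputable def fundVec (ξ : EG) (x : X) : Cn n :=
  rderiv EG (Cn n) (fun g : G => g • x) 1 ξ

/-- The functions, not necessarily of mean value zero, whose hamiltonian field is generated by
`ξ`. -/
structure IsHamiltonianFor (η : TwoForm n X) (ξ : EG) (f : X → ℝ) : Prop where
  smooth : ContMDiff 𝓘(ℝ, Cn n) 𝓘(ℝ, ℝ) ∞ f
  ham : ∀ x w, formAt η x ![fundVec (n := n) (G := G) EG ξ x, w] = -rderiv (Cn n) ℝ f x w

variable {EG G} {η : TwoForm n X}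

theorem rderiv_add {f g : X → ℝ} {x : X} (hf : MDifferentiableAt 𝓘(ℝ, Cn n) 𝓘(ℝ, ℝ) f x)
    (hg : MDifferentiableAt 𝓘(ℝ, Cn n) 𝓘(ℝ, ℝ) g x) :
    rderiv (Cn n) ℝ (fun x => f x + g x) x = rderiv (Cn n) ℝ f x + rderiv (Cn n) ℝ g x :=
  (hf.hasMFDerivAt.add hg.hasMFDerivAt).mfderiv

theorem rderiv_const_mul (r : ℝ) {f : X → ℝ} {x : X}
    (hf : MDifferentiableAt 𝓘(ℝ, Cn n) 𝓘(ℝ, ℝ) f x) :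
    rderiv (Cn n) ℝ (fun x => r * f x) x = r • rderiv (Cn n) ℝ f x :=
  (hf.hasMFDerivAt.const_smul r).mfderiv

theorem rderiv_const (r : ℝ) (x : X) : rderiv (Cn n) ℝ (fun _ : X => r) x = 0 :=
  mfderiv_const

theorem IsHamiltonianFor.add {ξ ζ : EG} {f g : X → ℝ} (hf : IsHamiltonianFor EG G η ξ f)
    (hg : IsHamiltonianFor EG G η ζ g) :
    IsHamiltonianFor EG G η (ξ + ζ) (fun x => f x + g x) := by
  refine ⟨hf.smooth.add hg.smooth, fun x w => ?_⟩
  rw [rderiv_add (hf.smooth.mdifferentiable (by simp) x) (hg.smooth.mdifferentiable (by simp) x),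
    fundVec, map_add, alt_add_left]
  have h1 := hf.ham x w
  have h2 := hg.ham x w
  rw [fundVec] at h1 h2
  rw [h1, h2, add_apply]
  ring

theorem IsHamiltonianFor.const_mul {ξ : EG} {f : X → ℝ} (r : ℝ)
    (hf : IsHamiltonianFor EG G η ξ f) : IsHamiltonianFor EG G η (r • ξ) (fun x => r * f x) := by
  refine ⟨contMDiff_const.mul hf.smooth, fun x w => ?_⟩
  rw [rderiv_const_mul r (hf.smooth.mdifferentiable (by simp) x), fundVec, map_smul, alt_smul_left]
  have h1 := hf.ham x w
  rw [fundVec] at h1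
  rw [h1, smul_apply, smul_eq_mul]
  ring

theorem IsHamiltonianFor.const (r : ℝ) : IsHamiltonianFor EG G η 0 (fun _ : X => r) := by
  refine ⟨contMDiff_const, fun x w => ?_⟩
  rw [rderiv_const, fundVec, map_zero, ← zero_smul ℝ (0 : Cn n), alt_smul_left]
  simp

variable [MeasurableSpace X]

theorem isKillingPotential_iff {f : X → ℝ} : IsKillingPotential EG G η f ↔
    ∃ ξ : EG, IsHamiltonianFor EG G η ξ f ∧ ∫ x, f x ∂(kahlerVolume η) = 0 := by
  constructor
  · rintro ⟨h1, h2, ξ, h3⟩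
    exact ⟨ξ, ⟨h1, h3⟩, h2⟩
  · rintro ⟨ξ, ⟨h1, h3⟩, h2⟩
    exact ⟨h1, h2, ξ, h3⟩

variable [BorelSpace X] [CompactSpace X] [IsFiniteMeasure (kahlerVolume η)]

theorem memLp_of_continuous {X : Type*} [TopologicalSpace X] [CompactSpace X] [MeasurableSpace X]
    [BorelSpace X] {μ : Measure X} [IsFiniteMeasure μ] {f : X → ℝ} (hf : Continuous f)
    (p : ENNReal) : MemLp f p μ := by
  obtain ⟨C, hC⟩ := isCompact_univ.exists_bound_of_continuousOn hf.continuousOn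
  exact MemLp.of_bound hf.aestronglyMeasurable C (.of_forall fun x => hC x (mem_univ x))

theorem integrable_of_continuous {X : Type*} [TopologicalSpace X] [CompactSpace X]
    [MeasurableSpace X] [BorelSpace X] {μ : Measure X} [IsFiniteMeasure μ] {f : X → ℝ}
    (hf : Continuous f) : Integrable f μ :=
  memLp_one_iff_integrable.1 (memLp_of_continuous hf 1)

theorem IsHamiltonianFor.sub_average {ξ : EG} {f : X → ℝ} (hf : IsHamiltonianFor EG G η ξ f) :
    IsKillingPotential EG G η (fun x => f x + -(⨍ y, f y ∂(kahlerVolume η))) := by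
  refine isKillingPotential_iff.2 ⟨ξ + 0, hf.add (.const _), ?_⟩
  have hi : Integrable f (kahlerVolume η) := integrable_of_continuous hf.smooth.continuous
  rw [integral_add hi (integrable_const _), integral_const, smul_neg, measureReal_def]
  have := measure_smul_average (kahlerVolume η) f
  rw [measureReal_def] at this
  rw [this, add_neg_cancel]

theorem IsKillingPotential.sub {f g : X → ℝ} (hf : IsKillingPotential EG G η f)
    (hg : IsKillingPotential EG G η g) :
    IsKillingPotential EG G η (fun x => f x + (-1) * g x) := by
  obtain ⟨ξ, h1, h2⟩ := isKillingPotential_iff.1 hf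
  obtain ⟨ζ, h3, h4⟩ := isKillingPotential_iff.1 hg
  refine isKillingPotential_iff.2 ⟨_, h1.add (h3.const_mul (-1)), ?_⟩
  have h5 : Continuous fun x => (-1 : ℝ) * g x := continuous_const.mul h3.smooth.continuous
  rw [integral_add (integrable_of_continuous h1.smooth.continuous) (integrable_of_continuous h5),
    integral_const_mul, h2, h4]
  simp

variable (EG G η) in
/-- The space of pairs of an element of the Lie algebra and a normalized hamiltonian for it. -/
noncomputable def killingPairs : Submodule ℝ (EG × (X → ℝ)) where
  carrier := {q | IsHamiltonianFor EG G η q.1 q.2 ∧ ∫ x, q.2 x ∂(kahlerVolume η) = 0}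
  add_mem' := by
    rintro ⟨ξ, f⟩ ⟨ζ, g⟩ ⟨h1, h2⟩ ⟨h3, h4⟩
    refine ⟨h1.add h3, ?_⟩
    have := integral_add (μ := kahlerVolume η) (integrable_of_continuous h1.smooth.continuous)
      (integrable_of_continuous h3.smooth.continuous)
    exact this.trans (by rw [h2, h4, add_zero])
  zero_mem' := ⟨.const 0, by simp⟩
  smul_mem' := by
    rintro r ⟨ξ, f⟩ ⟨h1, h2⟩
    refine ⟨h1.const_mul r, ?_⟩
    exact (integral_const_mul r f).trans (by rw [h2, mul_zero])

theorem finiteDimensional_killingPairs [FiniteDimensional ℝ EG] [IsManifold 𝓘(ℝ, Cn n) ∞ X]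
    [PreconnectedSpace X] (hμ : kahlerVolume η univ ≠ 0) :
    FiniteDimensional ℝ (killingPairs EG G η) := by
  refine Module.Finite.of_injective
    ((LinearMap.fst ℝ EG (X → ℝ)).comp (killingPairs EG G η).subtype) ?_
  rw [← LinearMap.ker_eq_bot, LinearMap.ker_eq_bot']
  rintro ⟨⟨ξ, f⟩, h1, h2⟩ (rfl : ξ = 0)
  have h3 : ∀ x, rderiv (Cn n) ℝ f x = 0 := by
    intro x
    ext1 w
    have := h1.ham x w
    rw [fundVec, map_zero, ← zero_smul ℝ (0 : Cn n), alt_smul_left] at this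
    simpa using this.symm
  have hc := eq_of_rderiv_eq_zero (h1.smooth.mdifferentiable (by simp)) h3
  have h0 : ∀ x, f x = 0 := by
    intro x
    have h4 : ∫ y, f y ∂(kahlerVolume η) = ∫ _, f x ∂(kahlerVolume η) := by
      congr 1; ext y; exact hc y x
    rw [integral_const, smul_eq_mul] at h4
    have h5 : (kahlerVolume η).real univ ≠ 0 := by
      rw [measureReal_def, ENNReal.toReal_ne_zero]
      exact ⟨hμ, measure_ne_top _ _⟩
    have h6 := h4.symm.trans h2
    exact (mul_eq_zero.1 h6).resolve_left h5
  ext x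
  · rfl
  · exact h0 x

theorem exists_killingProjection [FiniteDimensional ℝ EG] [IsManifold 𝓘(ℝ, Cn n) ∞ X]
    [PreconnectedSpace X] {f : X → ℝ} (hf : Continuous f) :
    ∃ p, IsKillingProjection EG G η f p := by
  by_cases hμ : kahlerVolume η univ = 0
  · have hμ' : kahlerVolume η = 0 := Measure.measure_univ_eq_zero.1 hμ
    refine ⟨fun _ => 0, isKillingPotential_iff.2 ⟨0, .const 0, by simp⟩, fun q _ => ?_⟩
    simp [hμ']
  have := finiteDimensional_killingPairs (EG := EG) (G := G) hμ
  have hmem : ∀ q : killingPairs EG G η, MemLp q.1.2 2 (kahlerVolume η) := fun q =>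
    memLp_of_continuous q.2.1.smooth.continuous 2
  let T : killingPairs EG G η →ₗ[ℝ] Lp ℝ 2 (kahlerVolume η) :=
    { toFun := fun q => (hmem q).toLp
      map_add' := fun _ _ => rfl
      map_smul' := fun _ _ => rfl }
  have hfm : MemLp f 2 (kahlerVolume η) := memLp_of_continuous hf 2
  let K := LinearMap.range T
  have hK := K.sub_starProjection_mem_orthogonal hfm.toLp
  obtain ⟨p, hp⟩ : K.starProjection hfm.toLp ∈ K := Submodule.starProjection_apply_mem _ _
  refine ⟨p.1.2, isKillingPotential_iff.2 ⟨p.1.1, p.2⟩, fun q hq => ?_⟩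
  obtain ⟨ζ, hq⟩ := isKillingPotential_iff.1 hq
  have h1 := (Submodule.mem_orthogonal K _).1 hK (T ⟨(ζ, q), hq⟩) ⟨_, rfl⟩
  rw [← hp, L2.inner_def] at h1
  rw [← h1]
  refine integral_congr_ae ?_
  filter_upwards [hfm.coeFn_toLp, (hmem p).coeFn_toLp, (hmem ⟨(ζ, q), hq⟩).coeFn_toLp,
    Lp.coeFn_sub hfm.toLp (T p)] with x e1 e2 e3 e4
  have e2' : (T p : X → ℝ) x = p.1.2 x := e2
  have e3' : (T ⟨(ζ, q), hq⟩ : X → ℝ) x = q x := e3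
  rw [e4, Pi.sub_apply, e1, e2', e3']
  simp

theorem isKillingProjection_killingProjection [FiniteDimensional ℝ EG] [IsManifold 𝓘(ℝ, Cn n) ∞ X]
    [PreconnectedSpace X] {f : X → ℝ} (hf : Continuous f) :
    IsKillingProjection EG G η f (killingProjection EG G η f) := by
  have h := exists_killingProjection (EG := EG) (G := G) (η := η) hf
  rw [killingProjection, dif_pos h]
  exact h.choose_spec

theorem continuous_reducedScalarCurvature [FiniteDimensional ℝ EG] [IsManifold 𝓘(ℝ, Cn n) ∞ X]
    [PreconnectedSpace X] (hS : Continuous (scalarCurvature (n := n) η)) :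
    Continuous (reducedScalarCurvature EG G η) :=
  (hS.sub continuous_const).sub
    (isKillingProjection_killingProjection (EG := EG) (G := G) hS).1.smooth.continuous

/-- The reduced scalar curvature minimizes the distance of the scalar curvature to the space of
hamiltonians of `Lie(G)`. -/
theorem calabiEnergy_le [FiniteDimensional ℝ EG] [IsManifold 𝓘(ℝ, Cn n) ∞ X]
    [PreconnectedSpace X] (hS : Continuous (scalarCurvature (n := n) η)) {ξ : EG} {q : X → ℝ}
    (hq : IsHamiltonianFor EG G η ξ q) :
    calabiEnergy EG G η ≤ ∫ x, (scalarCurvature η x - q x) ^ 2 ∂(kahlerVolume η) := by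
  obtain ⟨hp, hproj⟩ := isKillingProjection_killingProjection (EG := EG) (G := G) (η := η) hS
  set μ := kahlerVolume η
  set S := scalarCurvature η
  set p := killingProjection EG G η S
  set r := reducedScalarCurvature EG G η
  have hr : Continuous r := continuous_reducedScalarCurvature hS
  have hpc : Continuous p := hp.smooth.continuous
  have hqc : Continuous q := hq.smooth.continuous
  let d : X → ℝ := fun x => p x + (-1) * (q x + -(⨍ y, q y ∂μ))
  have hd : IsKillingPotential EG G η d := hp.sub hq.sub_average
  have hdc : Continuous d := hd.smooth.continuous
  let b : ℝ := (⨍ y, S y ∂μ) - ⨍ y, q y ∂μ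
  have hrd : ∀ x, r x = S x - (⨍ y, S y ∂μ) - p x := fun x => rfl
  have hsum : ∀ x, S x - q x = r x + (d x + b) := fun x => by
    rw [hrd]; simp only [d, b]; ring
  have hr0 : ∫ x, r x ∂μ = 0 := by
    have e : ∀ x, r x = (S x - p x) - ⨍ y, S y ∂μ := fun x => by rw [hrd]; ring
    simp_rw [e]
    have i1 : Integrable (fun x => S x - p x) μ := integrable_of_continuous (hS.sub hpc)
    rw [integral_sub i1 (integrable_const _),
      integral_sub (integrable_of_continuous hS) (integrable_of_continuous hpc), hp.mean_zero,
      integral_const, measure_smul_average, sub_zero, sub_self]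
  have hrd0 : ∫ x, r x * d x ∂μ = 0 := by
    have e : ∀ x, r x * d x = (S x - p x) * d x - (⨍ y, S y ∂μ) * d x := fun x => by
      rw [hrd]; ring
    simp_rw [e]
    have i1 : Integrable (fun x => (S x - p x) * d x) μ :=
      integrable_of_continuous ((hS.sub hpc).mul hdc)
    have i2 : Integrable (fun x => (⨍ y, S y ∂μ) * d x) μ :=
      integrable_of_continuous (continuous_const.mul hdc)
    rw [integral_sub i1 i2, hproj d hd, integral_const_mul, hd.mean_zero]
    simp
  have hexp : ∀ x, (S x - q x) ^ 2 = r x ^ 2 + (2 * (r x * d x) + (2 * b) * r x + (d x + b) ^ 2) :=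
    fun x => by rw [hsum]; ring
  have hcalc : ∫ x, (S x - q x) ^ 2 ∂μ = ∫ x, r x ^ 2 ∂μ + ∫ x, (d x + b) ^ 2 ∂μ := by
    simp_rw [hexp]
    have c1 : Continuous fun x => r x ^ 2 := hr.pow 2
    have c2 : Continuous fun x => 2 * (r x * d x) := continuous_const.mul (hr.mul hdc)
    have c3 : Continuous fun x => 2 * b * r x := continuous_const.mul hr
    have c4 : Continuous fun x => (d x + b) ^ 2 := (hdc.add continuous_const).pow 2
    have c5 : Continuous fun x => 2 * (r x * d x) + 2 * b * r x := c2.add c3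
    have c6 : Continuous fun x => 2 * (r x * d x) + 2 * b * r x + (d x + b) ^ 2 := c5.add c4
    rw [integral_add (integrable_of_continuous c1) (integrable_of_continuous c6),
      integral_add (integrable_of_continuous c5) (integrable_of_continuous c4),
      integral_add (integrable_of_continuous c2) (integrable_of_continuous c3),
      integral_const_mul, integral_const_mul, hr0, hrd0]
    ring
  rw [hcalc]
  have : 0 ≤ ∫ x, (d x + b) ^ 2 ∂μ := integral_nonneg fun x => sq_nonneg _
  change ∫ x, r x ^ 2 ∂μ ≤ _
  linarith

end Killing

/-! ## Lipschitz dependence on the parameter -/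

section Lipschitz

theorem exists_lipschitz_param {E W : Type*} [NormedAddCommGroup E] [NormedSpace ℝ E]
    [NormedAddCommGroup W] [NormedSpace ℝ W] {h : E × ℂ → W} {z₀ : E}
    (hh : ∀ s ∈ Icc (0 : ℝ) 1, ContDiffAt ℝ ∞ h (z₀, (s : ℂ))) :
    ∃ C, ∀ᶠ z in 𝓝 z₀, ∀ s ∈ Icc (0 : ℝ) 1, ‖h (z, (s : ℂ)) - h (z, 0)‖ ≤ C * s := by
  let ν : E → ℝ → E × ℂ := fun z s => (z, (s : ℂ))
  have hν : Continuous fun q : E × ℝ => ν q.1 q.2 := by fun_prop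
  have hd : ∀ s ∈ Icc (0 : ℝ) 1, ContinuousAt (fderiv ℝ h) (ν z₀ s) := fun s hs =>
    ((hh s hs).fderiv_right (m := ∞) (by simp)).continuousAt
  have hν0 : Continuous (ν z₀) := by fun_prop
  have hc : ContinuousOn (fun s : ℝ => fderiv ℝ h (ν z₀ s)) (Icc 0 1) := fun s hs =>
    ((hd s hs).comp_of_eq hν0.continuousAt rfl).continuousWithinAt
  obtain ⟨C, hC⟩ := isCompact_Icc.exists_bound_of_continuousOn hc
  have hev : ∀ᶠ z in 𝓝 z₀, ∀ s ∈ Icc (0 : ℝ) 1,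
      DifferentiableAt ℝ h (ν z s) ∧ ‖fderiv ℝ h (ν z s)‖ ≤ C + 1 := by
    refine isCompact_Icc.eventually_forall_of_forall_eventually fun s hs => ?_
    have h1 : ∀ᶠ e in 𝓝 (ν z₀ s), DifferentiableAt ℝ h e := by
      filter_upwards [((hh s hs).of_le (m := 1) (by simp)).eventually (by simp)] with e he
      exact he.differentiableAt (by simp)
    have h2 : ∀ᶠ e in 𝓝 (ν z₀ s), ‖fderiv ℝ h e‖ < C + 1 :=
      (hd s hs).norm.eventually (gt_mem_nhds ((hC s hs).trans_lt (lt_add_one C)))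
    have h3 : Filter.Tendsto (fun q : E × ℝ => ν q.1 q.2) (𝓝 (z₀, s)) (𝓝 (ν z₀ s)) :=
      hν.continuousAt
    filter_upwards [h3.eventually h1, h3.eventually h2] with q hq1 hq2 using ⟨hq1, hq2.le⟩
  refine ⟨C + 1, ?_⟩
  filter_upwards [hev] with z hz s hs
  have hder : ∀ r ∈ Icc (0 : ℝ) 1, HasDerivWithinAt (fun r : ℝ => h (ν z r))
      (fderiv ℝ h (ν z r) (0, 1)) (Icc 0 1) r := by
    intro r hr
    have h1 : HasDerivAt (fun r : ℝ => ν z r) ((0 : E), (1 : ℂ)) r :=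
      (hasDerivAt_const r z).prodMk (Complex.ofRealCLM.hasDerivAt (x := r))
    exact ((hz r hr).1.hasFDerivAt.comp_hasDerivAt r h1).hasDerivWithinAt
  have hbd : ∀ r ∈ Icc (0 : ℝ) 1, ‖fderiv ℝ h (ν z r) (0, 1)‖ ≤ C + 1 := by
    intro r hr
    refine ((fderiv ℝ h (ν z r)).le_opNorm _).trans ?_
    have : ‖((0 : E), (1 : ℂ))‖ = 1 := by simp [Prod.norm_def]
    rw [this, mul_one]
    exact (hz r hr).2
  have := (convex_Icc (0 : ℝ) 1).norm_image_sub_le_of_norm_hasDerivWithin_le hder hbd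
    (left_mem_Icc.2 zero_le_one) hs
  rw [sub_zero, Real.norm_eq_abs, abs_of_nonneg hs.1] at this
  simpa [ν] using this

variable {n : ℕ} {M : Type*} [TopologicalSpace M] [ChartedSpace (Cn n) M]
  [IsManifold 𝓘(ℝ, Cn n) ∞ M]

theorem contMDiffAt_chart_prod (a : M) {z : Cn n} (hz : z ∈ (chartAt (Cn n) a).target) (s : ℂ) :
    ContMDiffAt 𝓘(ℝ, Cn n × ℂ) (𝓘(ℝ, Cn n).prod 𝓘(ℝ, ℂ)) ∞
      (fun q : Cn n × ℂ => ((chartAt (Cn n) a).symm q.1, q.2)) (z, s) := by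
  have h1 : ContMDiffAt 𝓘(ℝ, Cn n) 𝓘(ℝ, Cn n) ∞ (chartAt (Cn n) a).symm z :=
    (contMDiffOn_symm_of_mem_maximalAtlas (IsManifold.chart_mem_maximalAtlas a)).contMDiffAt
      ((chartAt (Cn n) a).open_target.mem_nhds hz)
  have h2 : ContMDiffAt 𝓘(ℝ, Cn n × ℂ) 𝓘(ℝ, Cn n) ∞ (fun q : Cn n × ℂ => q.1) (z, s) :=
    contDiff_fst.contMDiff.contMDiffAt
  have h3 : ContMDiffAt 𝓘(ℝ, Cn n × ℂ) 𝓘(ℝ, ℂ) ∞ (fun q : Cn n × ℂ => q.2) (z, s) :=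
    contDiff_snd.contMDiff.contMDiffAt
  exact (ContMDiffAt.comp (x := (z, s)) (g := (chartAt (Cn n) a).symm)
    (f := fun q : Cn n × ℂ => q.1) h1 h2).prodMk h3

theorem exists_lipschitz_of_contMDiff [CompactSpace M] {g : M × ℂ → ℝ}
    (hg : ContMDiff (𝓘(ℝ, Cn n).prod 𝓘(ℝ, ℂ)) 𝓘(ℝ, ℝ) ∞ g) :
    ∃ C, ∀ x, ∀ s ∈ Icc (0 : ℝ) 1, |g (x, (s : ℂ)) - g (x, 0)| ≤ C * s := by
  have hloc : ∀ a : M, ∃ C, ∃ U : Set M, IsOpen U ∧ a ∈ U ∧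
      ∀ x ∈ U, ∀ s ∈ Icc (0 : ℝ) 1, |g (x, (s : ℂ)) - g (x, 0)| ≤ C * s := by
    intro a
    set c := chartAt (Cn n) a
    obtain ⟨C, hC⟩ := exists_lipschitz_param
      (h := fun q : Cn n × ℂ => g (c.symm q.1, q.2)) (z₀ := c a) fun s _ =>
        ((hg _).comp _ (contMDiffAt_chart_prod a (mem_chart_target _ a) s)).contDiffAt
    obtain ⟨V, hV, hVo, haV⟩ := mem_nhds_iff.1 hC
    refine ⟨C, c.source ∩ c ⁻¹' V, c.isOpen_inter_preimage hVo, ⟨mem_chart_source _ a, haV⟩,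
      fun x hx s hs => ?_⟩
    have := hV hx.2 s hs
    simpa [c.left_inv hx.1] using this
  choose C U hU ha hC using hloc
  obtain ⟨t, ht⟩ := isCompact_univ.elim_finite_subcover U hU fun x _ => mem_iUnion.2 ⟨x, ha x⟩
  refine ⟨∑ a ∈ t, |C a|, fun x s hs => ?_⟩
  obtain ⟨a, hat, hxa⟩ := mem_iUnion₂.1 (ht (mem_univ x))
  refine (hC a x hxa s hs).trans (mul_le_mul_of_nonneg_right ?_ hs.1)
  exact (le_abs_self _).trans
    (Finset.single_le_sum (f := fun a => |C a|) (fun b _ => abs_nonneg _) hat)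

end Lipschitz

/-! ## Fundamental vector fields -/

section Fundamental

variable {n m : ℕ} {EG : Type*} [NormedAddCommGroup EG] [NormedSpace ℝ EG]
  {G : Type*} [TopologicalSpace G] [ChartedSpace EG G] [Group G]
  {Y : Type*} [TopologicalSpace Y] [ChartedSpace (Cn n) Y] [MulAction G Y]
  {𝒳 : Type*} [TopologicalSpace 𝒳] [ChartedSpace (Cn m) 𝒳] [MulAction G 𝒳]

theorem rderiv_fundVec {j : Y → 𝒳} {y : Y} (hj : MDifferentiableAt 𝓘(ℝ, Cn n) 𝓘(ℝ, Cn m) j y)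
    (hequiv : ∀ (g : G) (y : Y), j (g • y) = g • j y)
    (hact : MDifferentiableAt 𝓘(ℝ, EG) 𝓘(ℝ, Cn n) (fun g : G => g • y) 1) (ξ : EG) :
    rderiv (Cn n) (Cn m) j y (fundVec (G := G) EG ξ y) = fundVec (G := G) EG ξ (j y) := by
  have h1 : (fun g : G => g • j y) = j ∘ fun g : G => g • y := by
    ext g; exact (hequiv g y).symm
  have hj' : MDifferentiableAt 𝓘(ℝ, Cn n) 𝓘(ℝ, Cn m) j ((fun g : G => g • y) 1) := by
    simpa using hj
  rw [fundVec, fundVec, h1, rderiv_comp (f := fun g : G => g • y) hj' hact]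
  simp

/-- The pullback of fibrewise hamiltonians. -/
theorem isHamiltonianFor_comp {π : 𝒳 → ℂ} {Ω : TwoForm m 𝒳} {j : Y → 𝒳} {s : ℂ}
    (hj : ContMDiff 𝓘(ℝ, Cn n) 𝓘(ℝ, Cn m) ∞ j)
    (hπ : MDifferentiable 𝓘(ℝ, Cn m) 𝓘(ℝ, ℂ) π) (hs : ∀ y, π (j y) = s)
    (hequiv : ∀ (g : G) (y : Y), j (g • y) = g • j y)
    (hact : ∀ y : Y, MDifferentiableAt 𝓘(ℝ, EG) 𝓘(ℝ, Cn n) (fun g : G => g • y) 1)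
    {ξ : EG} {f : 𝒳 → ℝ} (hf : ContMDiff 𝓘(ℝ, Cn m) 𝓘(ℝ, ℝ) ∞ f)
    (hham : ∀ p, π p = s → ∀ w, rderiv (Cn m) ℂ π p w = 0 →
      formAt Ω p ![fundVec (G := G) EG ξ p, w] = rderiv (Cn m) ℝ f p w) :
    IsHamiltonianFor (n := n) EG G (pullback j Ω) ξ (fun y => (-1) * f (j y)) := by
  have hfj : ContMDiff 𝓘(ℝ, Cn n) 𝓘(ℝ, ℝ) ∞ (f ∘ j) := hf.comp hj
  refine ⟨contMDiff_const.mul hfj, fun y w => ?_⟩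
  have hjd := hj.mdifferentiable (by simp) y
  have h1 := rderiv_const_mul (-1) (hfj.mdifferentiable (by simp) y)
  have h2 : rderiv (Cn n) ℝ (f ∘ j) y = _ := rderiv_comp (hf.mdifferentiable (by simp) (j y)) hjd
  have hv : rderiv (Cn m) ℂ π (j y) (rderiv (Cn n) (Cn m) j y w) = 0 := by
    have h3 : rderiv (Cn n) ℂ (π ∘ j) y = 0 := by
      have : π ∘ j = fun _ => s := funext hs
      rw [this]
      exact mfderiv_const
    rw [rderiv_comp (hπ _) hjd] at h3
    exact congrArg (fun L : Cn n →L[ℝ] ℂ => L w) h3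
  have h4 := hham (j y) (hs y) _ hv
  rw [← rderiv_fundVec hjd hequiv (hact y)] at h4
  have h5 : formAt (pullback j Ω) y ![fundVec (G := G) EG ξ y, w] =
      formAt Ω (j y) ![rderiv (Cn n) (Cn m) j y (fundVec (G := G) EG ξ y),
        rderiv (Cn n) (Cn m) j y w] :=
    alt_comp_apply (formAt Ω (j y)) (rderiv (Cn n) (Cn m) j y) _ _
  rw [h5, h4]
  have h6 : rderiv (Cn n) ℝ (fun y => (-1) * f (j y)) y = (-1 : ℝ) • rderiv (Cn n) ℝ (f ∘ j) y := h1
  rw [h6, h2]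
  simp

/-- The fundamental vector fields of a smooth action are locally bounded in charts. -/
theorem exists_fundVec_bound [IsManifold 𝓘(ℝ, Cn n) ∞ Y] [IsManifold 𝓘(ℝ, EG) ∞ G]
    (hact : ContMDiff (𝓘(ℝ, EG).prod 𝓘(ℝ, Cn n)) 𝓘(ℝ, Cn n) ∞ (fun q : G × Y => q.1 • q.2))
    (ξ : EG) (a : Y) :
    ∃ C, ∀ᶠ z in 𝓝 (chartAt (Cn n) a a), ‖rderiv (Cn n) (Cn n) (chartAt (Cn n) a)
      ((chartAt (Cn n) a).symm z) (fundVec (G := G) EG ξ ((chartAt (Cn n) a).symm z))‖ ≤ C := by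
  set c := chartAt (Cn n) a
  set κ := chartAt EG (1 : G)
  have hc1 : ∀ z ∈ c.target, ContMDiffAt 𝓘(ℝ, Cn n) 𝓘(ℝ, Cn n) ∞ c.symm z := fun z hz =>
    (contMDiffOn_symm_of_mem_maximalAtlas (IsManifold.chart_mem_maximalAtlas a)).contMDiffAt
      (c.open_target.mem_nhds hz)
  have hc2 : ∀ y ∈ c.source, ContMDiffAt 𝓘(ℝ, Cn n) 𝓘(ℝ, Cn n) ∞ c y := fun y hy =>
    contMDiffAt_of_mem_maximalAtlas (IsManifold.chart_mem_maximalAtlas a) hy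
  have hκ : ContMDiffAt 𝓘(ℝ, EG) 𝓘(ℝ, EG) ∞ κ.symm (κ 1) :=
    (contMDiffOn_symm_of_mem_maximalAtlas (IsManifold.chart_mem_maximalAtlas (1 : G))).contMDiffAt
      (κ.open_target.mem_nhds (mem_chart_target _ _))
  have hκ1 : κ.symm (κ 1) = 1 := κ.left_inv (mem_chart_source _ _)
  let ψ : EG × Cn n → Cn n := fun q => c (κ.symm q.1 • c.symm q.2)
  have hψ : ∀ z ∈ c.target, ContDiffAt ℝ ∞ ψ (κ 1, z) := by
    intro z hz
    have e1 : ContMDiffAt 𝓘(ℝ, EG × Cn n) 𝓘(ℝ, EG) ∞ (fun q : EG × Cn n => κ.symm q.1) (κ 1, z) :=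
      ContMDiffAt.comp (x := (κ 1, z)) (g := κ.symm) (f := fun q : EG × Cn n => q.1) hκ
        contDiff_fst.contMDiff.contMDiffAt
    have e2 : ContMDiffAt 𝓘(ℝ, EG × Cn n) 𝓘(ℝ, Cn n) ∞ (fun q : EG × Cn n => c.symm q.2) (κ 1, z) :=
      ContMDiffAt.comp (x := (κ 1, z)) (g := c.symm) (f := fun q : EG × Cn n => q.2) (hc1 z hz)
        contDiff_snd.contMDiff.contMDiffAt
    have e3 : ContMDiffAt 𝓘(ℝ, EG × Cn n) 𝓘(ℝ, Cn n) ∞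
        (fun q : EG × Cn n => κ.symm q.1 • c.symm q.2) (κ 1, z) :=
      ContMDiffAt.comp (x := (κ 1, z)) (g := fun q : G × Y => q.1 • q.2) (hact _) (e1.prodMk e2)
    refine (ContMDiffAt.comp (x := (κ 1, z)) (g := c)
      (f := fun q : EG × Cn n => κ.symm q.1 • c.symm q.2) (hc2 _ ?_) e3).contDiffAt
    simp only [hκ1, one_smul]
    exact c.map_target hz
  have hψc : ContinuousAt (fun z => fderiv ℝ ψ (κ 1, z) (ξ, 0)) (c a) := by
    have h1 : ContinuousAt (fderiv ℝ ψ) (κ 1, c a) :=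
      ((hψ _ (mem_chart_target _ a)).fderiv_right (m := ∞) (by simp)).continuousAt
    have h2 : ContinuousAt (fun z => fderiv ℝ ψ (κ 1, z)) (c a) :=
      ContinuousAt.comp_of_eq (g := fderiv ℝ ψ) (f := fun z => (κ 1, z)) h1
        (by fun_prop) rfl
    exact h2.clm_apply continuousAt_const
  refine ⟨‖fderiv ℝ ψ (κ 1, c a) (ξ, 0)‖ + 1, ?_⟩
  filter_upwards [hψc.norm.eventually (gt_mem_nhds (lt_add_one _)),
    c.open_target.mem_nhds (mem_chart_target _ a)] with z hz hzt
  have hact1 : MDifferentiableAt 𝓘(ℝ, EG) 𝓘(ℝ, Cn n) (fun g : G => g • c.symm z) 1 :=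
    (ContMDiffAt.comp (x := (1 : G)) (g := fun q : G × Y => q.1 • q.2) (hact _)
      (contMDiffAt_id.prodMk contMDiffAt_const)).mdifferentiableAt (by simp)
  have hcz : MDifferentiableAt 𝓘(ℝ, Cn n) 𝓘(ℝ, Cn n) c ((fun g : G => g • c.symm z) 1) := by
    simp only [one_smul]
    exact (hc2 _ (c.map_target hzt)).mdifferentiableAt (by simp)
  have key : rderiv EG (Cn n) (c ∘ fun g : G => g • c.symm z) 1 =
      (fderiv ℝ ψ (κ 1, z)).comp (ContinuousLinearMap.inl ℝ EG (Cn n)) := by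
    have hd : HasFDerivAt (fun h : EG => ψ (h, z))
        ((fderiv ℝ ψ (κ 1, z)).comp (ContinuousLinearMap.inl ℝ EG (Cn n))) (κ 1) :=
      HasFDerivAt.comp (g := ψ) (f := fun h : EG => (h, z)) (κ 1)
        ((hψ z hzt).differentiableAt (by simp)).hasFDerivAt (hasFDerivAt_prodMk_left (κ 1) z)
    have hm : HasMFDerivAt 𝓘(ℝ, EG) 𝓘(ℝ, Cn n) (c ∘ fun g : G => g • c.symm z) 1
        ((fderiv ℝ ψ (κ 1, z)).comp (ContinuousLinearMap.inl ℝ EG (Cn n))) :=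
      ⟨ContinuousAt.comp (f := fun g : G => g • c.symm z) hcz.continuousAt hact1.continuousAt, hd.hasFDerivWithinAt⟩
    exact hm.mfderiv
  have h1 := rderiv_comp (f := fun g : G => g • c.symm z) hcz hact1
  have h2 : rderiv (Cn n) (Cn n) c (c.symm z) (fundVec (G := G) EG ξ (c.symm z)) =
      fderiv ℝ ψ (κ 1, z) (ξ, 0) := by
    have := congrArg (fun L : EG →L[ℝ] Cn n => L ξ) (h1.symm.trans key)
    simpa [fundVec] using this
  rw [h2]
  exact hz.le

end Fundamental

/-! ## Hamiltonians on a smooth family of symplectic forms -/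

section FamilyHamiltonian

variable {n m : ℕ} {EG : Type*} [NormedAddCommGroup EG] [NormedSpace ℝ EG]
  {G : Type*} [TopologicalSpace G] [ChartedSpace EG G] [Group G]
  {M : Type*} [TopologicalSpace M] [ChartedSpace (Cn n) M] [MulAction G M]
  [IsManifold 𝓘(ℝ, Cn n) ∞ M]
  {𝒳 : Type*} [TopologicalSpace 𝒳] [ChartedSpace (Cn m) 𝒳]
  {F : M × ℂ → 𝒳} {Ω : TwoForm m 𝒳}

theorem contMDiff_slice (hF : ContMDiff (𝓘(ℝ, Cn n).prod 𝓘(ℝ, ℂ)) 𝓘(ℝ, Cn m) ∞ F) (s : ℂ) :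
    ContMDiff 𝓘(ℝ, Cn n) 𝓘(ℝ, Cn m) ∞ (fun x => F (x, s)) :=
  hF.comp (contMDiff_id.prodMk contMDiff_const)

theorem contMDiffAt_family (hF : ContMDiff (𝓘(ℝ, Cn n).prod 𝓘(ℝ, ℂ)) 𝓘(ℝ, Cn m) ∞ F) (a : M)
    {z : Cn n} (hz : z ∈ (chartAt (Cn n) a).target) (s : ℂ) :
    ContMDiffAt 𝓘(ℝ, Cn n × ℂ) 𝓘(ℝ, Cn m) ∞
      (fun q : Cn n × ℂ => F ((chartAt (Cn n) a).symm q.1, q.2)) (z, s) :=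
  ContMDiffAt.comp (x := (z, s)) (g := F) (hF _) (contMDiffAt_chart_prod a hz s)

/-- The derivative of a hamiltonian in a chart. -/
theorem fderiv_hamiltonian (hF : ContMDiff (𝓘(ℝ, Cn n).prod 𝓘(ℝ, ℂ)) 𝓘(ℝ, Cn m) ∞ F) {s : ℂ}
    {ξ : EG} {h : M → ℝ} (hh : IsHamiltonianFor (n := n) EG G (pullback (fun x => F (x, s)) Ω) ξ h) (a : M)
    {z : Cn n} (hz : z ∈ (chartAt (Cn n) a).target) (w : Cn n) :
    fderiv ℝ (h ∘ (chartAt (Cn n) a).symm) z w =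
      -flatPull Ω (fun q : Cn n × ℂ => F ((chartAt (Cn n) a).symm q.1, q.2)) (z, s)
        ![(rderiv (Cn n) (Cn n) (chartAt (Cn n) a) ((chartAt (Cn n) a).symm z)
          (fundVec (G := G) EG ξ ((chartAt (Cn n) a).symm z)), 0), (w, 0)] := by
  set c := chartAt (Cn n) a
  have hs : MDifferentiableAt 𝓘(ℝ, Cn n) 𝓘(ℝ, Cn n) c.symm z :=
    (contMDiffOn_symm_of_mem_maximalAtlas (n := ∞) (IsManifold.chart_mem_maximalAtlas a)
      |>.contMDiffAt (c.open_target.mem_nhds hz)).mdifferentiableAt (by simp)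
  have hc : MDifferentiableAt 𝓘(ℝ, Cn n) 𝓘(ℝ, Cn n) c (c.symm z) :=
    (contMDiffAt_of_mem_maximalAtlas (n := ∞) (IsManifold.chart_mem_maximalAtlas a)
      (c.map_target hz)).mdifferentiableAt (by simp)
  set D := rderiv (Cn n) (Cn n) c.symm z
  set v := fundVec (n := n) (G := G) EG ξ (c.symm z)
  set ξ' := rderiv (Cn n) (Cn n) c (c.symm z) v
  have hDv : D ξ' = v := by
    have hs' : MDifferentiableAt 𝓘(ℝ, Cn n) 𝓘(ℝ, Cn n) c.symm (c (c.symm z)) := by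
      rw [c.right_inv hz]; exact hs
    have h1 : rderiv (Cn n) (Cn n) (c.symm ∘ c) (c.symm z) = ContinuousLinearMap.id ℝ (Cn n) := by
      rw [← rderiv_id (c.symm z)]
      refine rderiv_congr ?_
      filter_upwards [c.open_source.mem_nhds (c.map_target hz)] with y hy using c.left_inv hy
    rw [rderiv_comp hs' hc, c.right_inv hz] at h1
    exact congrArg (fun L : Cn n →L[ℝ] Cn n => L v) h1
  rw [← rderiv_eq_fderiv, rderiv_comp (hh.smooth.mdifferentiable (by simp) _) hs]
  have h2 := hh.ham (c.symm z) (D w)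
  have h3 : rderiv (Cn n) ℝ h (c.symm z) (D w) =
      -formAt (m := n) (pullback (fun x => F (x, s)) Ω) (c.symm z) ![D ξ', D w] := by
    rw [hDv, h2, neg_neg]
  have h4 : formAt (m := n) (pullback (fun x => F (x, s)) Ω) (c.symm z) ![D ξ', D w] =
      inChart (n := n) (pullback (fun x => F (x, s)) Ω) a z ![ξ', w] :=
    (alt_comp_apply (formAt (m := n) (pullback (fun x => F (x, s)) Ω) (c.symm z)) D ξ' w).symm
  rw [inChart_pullback hz ((contMDiff_slice hF s).mdifferentiable (by simp) _)] at h4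
  have hk : HasFDerivAt (fun z : Cn n => (z, s)) (ContinuousLinearMap.inl ℝ (Cn n) ℂ) z :=
    hasFDerivAt_prodMk_left z s
  have h5 : flatPull Ω ((fun x => F (x, s)) ∘ c.symm) z = _ :=
    flatPull_comp (G := fun q : Cn n × ℂ => F (c.symm q.1, q.2)) (k := fun z : Cn n => (z, s))
      ((contMDiffAt_family hF a hz s).mdifferentiableAt (by simp)) hk.differentiableAt
  rw [h5, alt_comp_apply, hk.fderiv] at h4
  exact h3.trans (congrArg Neg.neg h4)

theorem exists_hamiltonian_osc_bound [CompactSpace M] [PreconnectedSpace M]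
    [IsManifold 𝓘(ℝ, EG) ∞ G] [IsManifold 𝓘(ℝ, Cn m) ∞ 𝒳]
    (hact : ContMDiff (𝓘(ℝ, EG).prod 𝓘(ℝ, Cn n)) 𝓘(ℝ, Cn n) ∞ (fun q : G × M => q.1 • q.2))
    (hΩ : ∀ p : 𝒳, ContDiffOn ℝ ∞ (inChart Ω p) (chartAt (Cn m) p).target)
    (hF : ContMDiff (𝓘(ℝ, Cn n).prod 𝓘(ℝ, ℂ)) 𝓘(ℝ, Cn m) ∞ F) {ξ : EG} {p₀ : M → ℝ}
    (hp₀ : IsHamiltonianFor (n := n) EG G (pullback (fun x => F (x, 0)) Ω) ξ p₀) (x₀ : M) :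
    ∃ C, ∀ s ∈ Icc (0 : ℝ) 1, ∀ h : M → ℝ,
      IsHamiltonianFor (n := n) EG G (pullback (fun x => F (x, (s : ℂ))) Ω) ξ h →
      ∀ x, |(h x - p₀ x) - (h x₀ - p₀ x₀)| ≤ C * s := by
  let ι := {q : ℝ × (M → ℝ) // q.1 ∈ Icc (0 : ℝ) 1 ∧
    IsHamiltonianFor (n := n) EG G (pullback (fun x => F (x, (q.1 : ℂ))) Ω) ξ q.2}
  let u : ι → M → ℝ := fun i x => i.1.2 x + (-1) * p₀ x
  have hsm : ∀ i : ι, ContMDiff 𝓘(ℝ, Cn n) 𝓘(ℝ, ℝ) ∞ (u i) := fun i =>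
    i.2.2.smooth.add (contMDiff_const.mul hp₀.smooth)
  have hloc : ∀ a : M, ∃ C, ∀ᶠ z in 𝓝 (chartAt (Cn n) a a), ∀ i : ι,
      ‖fderiv ℝ (u i ∘ (chartAt (Cn n) a).symm) z‖ ≤ C * i.1.1 := by
    intro a
    set c := chartAt (Cn n) a
    obtain ⟨C₁, hC₁⟩ := exists_lipschitz_param
      (h := flatPull Ω (fun q : Cn n × ℂ => F (c.symm q.1, q.2))) (z₀ := c a) fun s _ =>
        contDiffAt_flatPull hΩ (contMDiffAt_family hF a (mem_chart_target _ a) s)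
    obtain ⟨C₂, hC₂⟩ := exists_fundVec_bound (n := n) hact ξ a
    refine ⟨C₁ * C₂, ?_⟩
    filter_upwards [hC₁, hC₂, c.open_target.mem_nhds (mem_chart_target _ a)] with z h1 h2 hz i
    have h1i := h1 i.1.1 i.2.1
    have hn1 : 0 ≤ C₁ * i.1.1 := (norm_nonneg _).trans h1i
    have hn2 : 0 ≤ C₂ := (norm_nonneg _).trans h2
    refine ContinuousLinearMap.opNorm_le_bound _ (by nlinarith) fun w => ?_
    have hs : MDifferentiableAt 𝓘(ℝ, Cn n) 𝓘(ℝ, Cn n) c.symm z :=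
      (contMDiffOn_symm_of_mem_maximalAtlas (n := ∞) (IsManifold.chart_mem_maximalAtlas a)
        |>.contMDiffAt (c.open_target.mem_nhds hz)).mdifferentiableAt (by simp)
    have d1 : DifferentiableAt ℝ (i.1.2 ∘ c.symm) z :=
      ((i.2.2.smooth.mdifferentiable (by simp) _).comp z hs).differentiableAt
    have d2 : DifferentiableAt ℝ (p₀ ∘ c.symm) z :=
      ((hp₀.smooth.mdifferentiable (by simp) _).comp z hs).differentiableAt
    have e : fderiv ℝ (u i ∘ c.symm) z w =
        fderiv ℝ (i.1.2 ∘ c.symm) z w - fderiv ℝ (p₀ ∘ c.symm) z w := by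
      have : u i ∘ c.symm = i.1.2 ∘ c.symm - p₀ ∘ c.symm := by
        ext y; simp [u, sub_eq_add_neg]
      rw [this, fderiv_sub d1 d2]
      rfl
    rw [e, fderiv_hamiltonian hF i.2.2 a hz, fderiv_hamiltonian hF hp₀ a hz, Real.norm_eq_abs]
    set v : Cn n × ℂ := (rderiv (Cn n) (Cn n) (chartAt (Cn n) a) ((chartAt (Cn n) a).symm z)
      (fundVec (G := G) EG ξ ((chartAt (Cn n) a).symm z)), 0)
    have hv : ‖v‖ ≤ C₂ := by simpa [v, Prod.norm_def] using h2
    have hw : ‖((w, 0) : Cn n × ℂ)‖ = ‖w‖ := by simp [Prod.norm_def]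
    have h3 := abs_alt_le (flatPull Ω (fun q : Cn n × ℂ => F (c.symm q.1, q.2)) (z, (i.1.1 : ℂ)) -
      flatPull Ω (fun q : Cn n × ℂ => F (c.symm q.1, q.2)) (z, 0)) v (w, 0)
    rw [hw, ContinuousAlternatingMap.sub_apply] at h3
    rw [← abs_neg]
    have e2 : ∀ A B : ℝ, -(-A - -B) = A - B := fun A B => by ring
    rw [e2]
    refine h3.trans ?_
    have : C₁ * C₂ * i.1.1 * ‖w‖ = (C₁ * i.1.1) * C₂ * ‖w‖ := by ring
    rw [this]
    gcongr
  obtain ⟨C, hC⟩ := exists_osc_bound (E := Cn n) (u := u) (ε := fun i => i.1.1)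
    (fun i => i.2.1.1) (fun i => (hsm i).mdifferentiable (by simp)) hloc x₀
  refine ⟨C, fun s hs h hh x => ?_⟩
  have := hC ⟨(s, h), hs, hh⟩ x
  simpa [u, sub_eq_add_neg] using this

end FamilyHamiltonian

/-! ## Embeddings -/

section Embedding

variable {E E' : Type*} [NormedAddCommGroup E] [NormedSpace ℂ E]
  [NormedAddCommGroup E'] [NormedSpace ℂ E']
  {X : Type*} [TopologicalSpace X] [ChartedSpace E X]
  {Y : Type*} [TopologicalSpace Y] [ChartedSpace E' Y]

/-- An immersion has a smooth local left inverse. -/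
theorem exists_local_leftInverse [IsManifold 𝓘(ℂ, E) ω X] [IsManifold 𝓘(ℂ, E') ω Y]
    {ι : X → Y} (hι : IsImmersion 𝓘(ℂ, E) 𝓘(ℂ, E') ω ι) (x : X) :
    ∃ r : Y → X, ContMDiffAt 𝓘(ℝ, E') 𝓘(ℝ, E) ∞ r (ι x) ∧ ∀ᶠ x' in 𝓝 x, r (ι x') = x' := by
  have h := hι.isImmersionAt x
  have hw : ∀ x' ∈ h.domChart.source, h.codChart (ι x') = h.equiv (h.domChart x', 0) := by
    intro x' hx'
    have hm : h.domChart x' ∈ (h.domChart.extend 𝓘(ℂ, E)).target := by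
      simpa using h.domChart.map_source hx'
    have := h.writtenInCharts hm
    simpa [OpenPartialHomeomorph.extend, h.domChart.left_inv hx'] using this
  let L : E' →L[ℂ] E := (ContinuousLinearMap.fst ℂ E h.complement).comp
    (h.equiv.symm : E' →L[ℂ] E × h.complement)
  have hL : ∀ x' ∈ h.domChart.source, L (h.codChart (ι x')) = h.domChart x' := by
    intro x' hx'
    simp [L, hw x' hx']
  refine ⟨fun y => h.domChart.symm (L (h.codChart y)), contMDiffAt_real ?_, ?_⟩
  · have h1 : ContMDiffAt 𝓘(ℂ, E') 𝓘(ℂ, E') ω h.codChart (ι x) :=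
      contMDiffAt_of_mem_maximalAtlas h.codChart_mem_maximalAtlas h.mem_codChart_source
    have h2 : ContMDiffAt 𝓘(ℂ, E') 𝓘(ℂ, E) ω (fun y => L (h.codChart y)) (ι x) :=
      L.contMDiff.contMDiffAt.comp _ h1
    refine ContMDiffAt.comp (x := ι x) (g := h.domChart.symm) (f := fun y => L (h.codChart y)) ?_ h2
    rw [hL x h.mem_domChart_source]
    exact (contMDiffOn_symm_of_mem_maximalAtlas h.domChart_mem_maximalAtlas).contMDiffAt
      (h.domChart.open_target.mem_nhds (h.domChart.map_source h.mem_domChart_source))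
  · filter_upwards [h.domChart.open_source.mem_nhds h.mem_domChart_source] with x' hx'
    rw [hL x' hx', h.domChart.left_inv hx']

end Embedding

/-! ## The scalar curvature of the fibres -/

section FibreScal

variable {n : ℕ} {𝒳 : Type*} [TopologicalSpace 𝒳] [ChartedSpace (Cn (n + 1)) 𝒳]
  [IsManifold 𝓘(ℂ, Cn (n + 1)) ω 𝒳] {π : 𝒳 → ℂ} {Ω : TwoForm (n + 1) 𝒳}

/-- The scalar curvature of the fibres of `π`, as a function on the total space. -/
noncomputable def fibreScal (hπ : IsSubmersion 𝓘(ℂ, Cn (n + 1)) 𝓘(ℂ, ℂ) ω π)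
    (Ω : TwoForm (n + 1) 𝒳) (p : 𝒳) : ℝ :=
  (exists_adaptedChart hπ p).choose.scal Ω p

theorem scalarCurvature_pullback_eq_fibreScal (hΩ : IsKahlerForm Ω)
    (hπ : IsSubmersion 𝓘(ℂ, Cn (n + 1)) 𝓘(ℂ, ℂ) ω π)
    {Y : Type*} [TopologicalSpace Y] [ChartedSpace (Cn n) Y] [IsManifold 𝓘(ℂ, Cn n) ω Y]
    {j : Y → 𝒳} {s : ℂ} (hj : IsFibreMap n π j s) (y : Y) :
    scalarCurvature (n := n) (pullback j Ω) y = fibreScal hπ Ω (j y) :=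
  AdaptedChart.scalarCurvature_pullback _ hΩ hj (exists_adaptedChart hπ (j y)).choose_spec

theorem contMDiff_fibreScal (hΩ : IsKahlerForm Ω)
    (hπ : IsSubmersion 𝓘(ℂ, Cn (n + 1)) 𝓘(ℂ, ℂ) ω π)
    {Y Z : Type*} [TopologicalSpace Y] [ChartedSpace (Cn n) Y] [IsManifold 𝓘(ℂ, Cn n) ω Y]
    [TopologicalSpace Z] [ChartedSpace (Cn n) Z] [IsManifold 𝓘(ℂ, Cn n) ω Z]
    (hcov : ∀ p : 𝒳, (∃ j : Y → 𝒳, ∃ s, IsFibreMap n π j s ∧ p ∈ range j) ∨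
      ∃ j : Z → 𝒳, ∃ s, IsFibreMap n π j s ∧ p ∈ range j) :
    ContMDiff 𝓘(ℝ, Cn (n + 1)) 𝓘(ℝ, ℝ) ∞ (fibreScal hπ Ω) := by
  intro p₀
  obtain ⟨A, hA⟩ := exists_adaptedChart hπ p₀
  refine (A.contMDiffAt_scal hΩ hA).congr_of_eventuallyEq ?_
  filter_upwards [A.chart.open_source.mem_nhds hA] with p hp
  rcases hcov p with ⟨j, s, hj, y, rfl⟩ | ⟨j, s, hj, y, rfl⟩
  · rw [← scalarCurvature_pullback_eq_fibreScal hΩ hπ hj, A.scalarCurvature_pullback hΩ hj hp]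
  · rw [← scalarCurvature_pullback_eq_fibreScal hΩ hπ hj, A.scalarCurvature_pullback hΩ hj hp]

end FibreScal

/-! ## Parametrizations of the fibres -/

section Param

variable {n : ℕ} {𝒳 : Type*} [TopologicalSpace 𝒳] [ChartedSpace (Cn (n + 1)) 𝒳]
  [IsManifold 𝓘(ℂ, Cn (n + 1)) ω 𝒳] {π : 𝒳 → ℂ}
  {X : Type*} [TopologicalSpace X] [ChartedSpace (Cn n) X] [IsManifold 𝓘(ℂ, Cn n) ω X]

theorem isFibreMap_smul [MulAction ℂˣ 𝒳]
    (hact : ContMDiffSMul 𝓘(ℂ, ℂ) 𝓘(ℂ, Cn (n + 1)) ω ℂˣ 𝒳)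
    (hπ : ∀ (c : ℂˣ) (x : 𝒳), π (c • x) = (c : ℂ) * π x)
    {ι : X → 𝒳} (hι : IsImmersion 𝓘(ℂ, Cn n) 𝓘(ℂ, Cn (n + 1)) ω ι)
    (hfib : ∀ x, π (ι x) = 1) (c : ℂˣ) : IsFibreMap n π (fun x => c • ι x) c := by
  have hs : ∀ c : ℂˣ, ContMDiff 𝓘(ℂ, Cn (n + 1)) 𝓘(ℂ, Cn (n + 1)) ω (fun x : 𝒳 => c • x) :=
    fun c => hact.contMDiff_smul.comp (contMDiff_const.prodMk contMDiff_id)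
  have hh : ContMDiff 𝓘(ℂ, Cn n) 𝓘(ℂ, Cn (n + 1)) ω (fun x => c • ι x) :=
    (hs c).comp hι.contMDiff
  refine ⟨hh, fun x => ?_, fun x => by rw [hπ, hfib, mul_one]⟩
  obtain ⟨r, hr, hrι⟩ := exists_local_leftInverse hι x
  have hr' : ContMDiffAt 𝓘(ℝ, Cn (n + 1)) 𝓘(ℝ, Cn n) ∞ (fun p => r (c⁻¹ • p)) (c • ι x) :=
    ContMDiffAt.comp (x := c • ι x) (g := r) (f := fun p => c⁻¹ • p)
      (by simpa using hr) (contMDiffAt_real (hs c⁻¹ _))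
  refine rderiv_injective_of_leftInverse (g := fun p => r (c⁻¹ • p))
    (hr'.mdifferentiableAt (by simp)) ((contMDiffAt_real (hh x)).mdifferentiableAt (by simp)) ?_
  filter_upwards [hrι] with x' hx'
  simpa using hx'

theorem isFibreMap_of_trivialization
    (F : (X × ℂ) ≃ₘ^∞⟮𝓘(ℝ, Cn n).prod 𝓘(ℝ, ℂ), 𝓘(ℝ, Cn (n + 1))⟯ 𝒳)
    (hF_fib : ∀ (x : X) (z : ℂ), π (F (x, z)) = z) {z : ℂ}
    (hF : ContMDiff 𝓘(ℂ, Cn n) 𝓘(ℂ, Cn (n + 1)) ω (fun x : X => F (x, z))) :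
    IsFibreMap n π (fun x => F (x, z)) z := by
  refine ⟨hF, fun x => ?_, fun x => hF_fib x z⟩
  have hg : ContMDiff 𝓘(ℝ, Cn (n + 1)) 𝓘(ℝ, Cn n) ∞ (fun p => (F.symm p).1) :=
    contMDiff_fst.comp F.symm.contMDiff
  refine rderiv_injective_of_leftInverse (g := fun p => (F.symm p).1)
    (hg.mdifferentiable (by simp) _) ((contMDiffAt_real (hF x)).mdifferentiableAt (by simp))
    (.of_forall fun x' => by simp)

/-- Orbit maps in an embedded invariant submanifold are differentiable. -/
theorem mdifferentiableAt_orbit {EG : Type*} [NormedAddCommGroup EG] [NormedSpace ℝ EG]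
    {G : Type*} [TopologicalSpace G] [ChartedSpace EG G] [Group G] [MulAction G X] [MulAction G 𝒳]
    (hact : ContMDiffSMul 𝓘(ℝ, EG) 𝓘(ℝ, Cn (n + 1)) ∞ G 𝒳)
    {ι : X → 𝒳} (hι : IsSmoothEmbedding 𝓘(ℂ, Cn n) 𝓘(ℂ, Cn (n + 1)) ω ι)
    (hequiv : ∀ (g : G) (x : X), ι (g • x) = g • ι x) (x : X) :
    MDifferentiableAt 𝓘(ℝ, EG) 𝓘(ℝ, Cn n) (fun g : G => g • x) 1 := by
  have ho : ContMDiff 𝓘(ℝ, EG) 𝓘(ℝ, Cn (n + 1)) ∞ (fun g : G => g • ι x) :=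
    hact.contMDiff_smul.comp (contMDiff_id.prodMk contMDiff_const)
  have hc : Continuous (fun g : G => g • x) := by
    rw [hι.isEmbedding.continuous_iff]
    refine ho.continuous.congr fun g => (hequiv g x).symm
  obtain ⟨r, hr, hrι⟩ := exists_local_leftInverse hι.isImmersion x
  have h1 : ContMDiffAt 𝓘(ℝ, EG) 𝓘(ℝ, Cn n) ∞ (fun g : G => r (g • ι x)) 1 :=
    ContMDiffAt.comp (x := (1 : G)) (g := r) (f := fun g : G => g • ι x) (by simpa using hr) (ho 1)
  refine (h1.congr_of_eventuallyEq ?_).mdifferentiableAt (by simp)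
  have ht : Filter.Tendsto (fun g : G => g • x) (𝓝 1) (𝓝 x) := by
    simpa using hc.tendsto 1
  filter_upwards [ht.eventually hrι] with g hg
  rw [← hequiv, hg]

end Param

section Topology

variable {𝒳 X M : Type*} [TopologicalSpace 𝒳] [TopologicalSpace X] [TopologicalSpace M] {π : 𝒳 → ℂ}

theorem compactSpace_of_range_eq_fibre (hπ : IsProperMap π) {ι : X → 𝒳}
    (hι : Topology.IsEmbedding ι) {z : ℂ} (hrange : range ι = π ⁻¹' {z}) : CompactSpace X := by
  rw [← isCompact_univ_iff, hι.isCompact_iff, image_univ, hrange]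
  exact hπ.isCompact_preimage isCompact_singleton

theorem compactSpace_of_trivialization (hπ : IsProperMap π) (F : (M × ℂ) ≃ₜ 𝒳)
    (hF_fib : ∀ (x : M) (z : ℂ), π (F (x, z)) = z) : CompactSpace M := by
  have h := (hπ.isCompact_preimage (isCompact_singleton (x := (0 : ℂ)))).image
    (continuous_fst.comp F.symm.continuous)
  rw [← isCompact_univ_iff]
  refine h.of_isClosed_subset isClosed_univ fun x _ => ⟨F (x, 0), hF_fib x 0, by simp⟩

theorem preconnectedSpace_of_trivialization [PreconnectedSpace M] (F : (M × ℂ) ≃ₜ 𝒳)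
    (hF_fib : ∀ (x : M) (z : ℂ), π (F (x, z)) = z) {ι : X → 𝒳}
    (hι : Topology.IsEmbedding ι) {z : ℂ} (hrange : range ι = π ⁻¹' {z}) :
    PreconnectedSpace X := by
  have hr : range (fun x => F (x, z)) = range ι := by
    rw [hrange]
    ext p
    refine ⟨?_, fun hp => ⟨(F.symm p).1, ?_⟩⟩
    · rintro ⟨x, rfl⟩
      exact hF_fib x z
    · obtain ⟨⟨y, w⟩, rfl⟩ := F.surjective p
      rw [mem_preimage, hF_fib, mem_singleton_iff] at hp
      simp [hp]
  have h1 : IsPreconnected (range ι) := by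
    rw [← hr]
    exact isPreconnected_range (F.continuous.comp (by fun_prop))
  refine ⟨?_⟩
  rw [← hι.isInducing.isPreconnected_image, image_univ]
  exact h1

end Topology

theorem expNeg_coe (t : ℝ) : ((expNeg t : ℂˣ) : ℂ) = ((Real.exp (-t) : ℝ) : ℂ) := by
  simp [expNeg]

end TestConf

theorem modified_Calabi_energy_decays_exponentially
    (n : ℕ)
    -- the compact connected Lie group `G`
    {EG : Type*} [NormedAddCommGroup EG] [NormedSpace ℝ EG] [FiniteDimensional ℝ EG]
    {G : Type*} [TopologicalSpace G] [ChartedSpace EG G] [Group G] [LieGroup 𝓘(ℝ, EG) ∞ G]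
    [CompactSpace G] [ConnectedSpace G]
    -- the total space `𝒳` and the holomorphic line bundle `L` on it
    {𝒳 : Type*} [TopologicalSpace 𝒳] [T2Space 𝒳] [ChartedSpace (Cn (n + 1)) 𝒳]
    [IsManifold 𝓘(ℂ, Cn (n + 1)) ω 𝒳]
    {L : 𝒳 → Type*} [∀ x, AddCommGroup (L x)] [∀ x, Module ℂ (L x)]
    [TopologicalSpace (TotalSpace ℂ L)] [∀ x, TopologicalSpace (L x)] [FiberBundle ℂ L]
    [VectorBundle ℂ ℂ L] [ContMDiffVectorBundle ω ℂ L 𝓘(ℂ, Cn (n + 1))]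
    -- the `G`-invariant smooth test configuration
    [MulAction ℂˣ 𝒳] [MulAction ℂˣ (TotalSpace ℂ L)] [MulAction G 𝒳] [MulAction G (TotalSpace ℂ L)]
    (π : 𝒳 → ℂ) (hπ : IsSmoothTestConfiguration n L π) (hG : IsGInvariant n L EG G π)
    -- the generic fibre `X = 𝒳₁ = π⁻¹(1)` as a complex manifold with its `G`-action
    {X : Type*} [TopologicalSpace X] [ChartedSpace (Cn n) X] [IsManifold 𝓘(ℂ, Cn n) ω X]
    [MeasurableSpace X] [BorelSpace X] [MulAction G X]
    (ι : X → 𝒳) (hι : IsSmoothEmbedding 𝓘(ℂ, Cn n) 𝓘(ℂ, Cn (n + 1)) ω ι)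
    (hι_range : range ι = π ⁻¹' {1}) (hι_equiv : ∀ (g : G) (x : X), ι (g • x) = g • ι x)
    -- the smooth `G`-equivariant trivialization `F`, a biholomorphism of `M = (M, J₀)` onto the
    -- central fibre at `z = 0`
    {M : Type*} [TopologicalSpace M] [ConnectedSpace M] [ChartedSpace (Cn n) M]
    [IsManifold 𝓘(ℂ, Cn n) ω M] [MeasurableSpace M] [BorelSpace M] [MulAction G M]
    (F : (M × ℂ) ≃ₘ^∞⟮𝓘(ℝ, Cn n).prod 𝓘(ℝ, ℂ), 𝓘(ℝ, Cn (n + 1))⟯ 𝒳)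
    (hF_fib : ∀ (x : M) (z : ℂ), π (F (x, z)) = z)
    (hF_equiv : ∀ (g : G) (x : M) (z : ℂ), F (g • x, z) = g • F (x, z))
    (hF_zero : ContMDiff 𝓘(ℂ, Cn n) 𝓘(ℂ, Cn (n + 1)) ω (fun x : M => F (x, 0)))
    -- the Kähler form `Ω`
    (Ω : TwoForm (n + 1) 𝒳) (hΩ : IsKahlerForm Ω)
    (hΩ_circle : ∀ u : Circle, pullback (fun x : 𝒳 => Circle.toUnits u • x) Ω = Ω)
    (hΩ_G : ∀ g : G, pullback (fun x : 𝒳 => g • x) Ω = Ω)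
    (hΩ_c1 : RepresentsC1OnFibres L π Ω)
    (hΩ_ham : IsHamiltonianCircleAction Ω)
    (hΩ_hamG : IsHamiltonianOnFibres EG G π Ω)
    -- the metric on the central fibre is extremal: `S^G(F₀^*Ω) = 0`
    (Ω₀ : TwoForm n M) (hΩ₀ : Ω₀ = pullback (fun x : M => F (x, 0)) Ω)
    (hext : ∀ x : M, reducedScalarCurvature EG G Ω₀ x = 0)
    -- the forms `ω_t = ρ_{e^{-t}}^* Ω` on `X`, and their potentials `φ_t`
    (ωt : ℝ → TwoForm n X) (hωt : ∀ t, ωt t = pullback (fun x : X => expNeg t • ι x) Ω)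
    (φ : ℝ → X → ℝ) (hφ : ∀ t, ContMDiff 𝓘(ℝ, Cn n) 𝓘(ℝ, ℝ) ∞ (φ t))
    (hφω : ∀ t x, ωt t x = ωt 0 x + iddbar (φ t) x) :
    (∀ t, Integrable (fun x => reducedScalarCurvature EG G (ωt t) x ^ 2) (kahlerVolume (ωt t))) ∧
    (∀ t, modifiedCalabi EG G (ωt 0) (φ t) = calabiEnergy EG G (ωt t)) ∧
    (∃ C c : ℝ, 0 < c ∧ ∀ t : ℝ, 0 ≤ t →
      |modifiedCalabi EG G (ωt 0) (φ t) - calabiEnergy EG G Ω₀| ≤ C * Real.exp (-c * t)) ∧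
    calabiEnergy EG G Ω₀ = 0 := by
  have : IsManifold 𝓘(ℝ, Cn (n + 1)) ∞ 𝒳 := isManifold_real
  have : IsManifold 𝓘(ℝ, Cn n) ∞ X := isManifold_real
  have : IsManifold 𝓘(ℝ, Cn n) ∞ M := isManifold_real
  have : IsManifold 𝓘(ℝ, EG) ∞ G := LieGroup.toContMDiffMul.toIsManifold
  have : CompactSpace M := compactSpace_of_trivialization hπ.proper F.toHomeomorph hF_fib
  have : CompactSpace X := compactSpace_of_range_eq_fibre hπ.proper hι.isEmbedding hι_range
  have : PreconnectedSpace X :=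
    preconnectedSpace_of_trivialization F.toHomeomorph hF_fib hι.isEmbedding hι_range
  have hι_fib : ∀ x, π (ι x) = 1 := fun x => by
    have : ι x ∈ π ⁻¹' {1} := hι_range ▸ mem_range_self x
    exact this
  have hj : ∀ c : ℂˣ, IsFibreMap n π (fun x => c • ι x) c :=
    isFibreMap_smul hπ.action hπ.equivariant hι.isImmersion hι_fib
  have hj_inj : ∀ c : ℂˣ, Function.Injective (fun x => c • ι x) := fun c x y h =>
    hι.isEmbedding.injective (MulAction.injective c h)
  have hF₀ : IsFibreMap n π (fun x : M => F (x, 0)) 0 :=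
    isFibreMap_of_trivialization F hF_fib hF_zero
  have hF_surj : ∀ p, ∃ (y : M) (w : ℂ), F (y, w) = p := fun p =>
    ⟨(F.symm p).1, (F.symm p).2, F.apply_symm_apply p⟩
  -- the scalar curvature of the fibres
  set S := fibreScal hπ.submersion Ω with hSdef
  have hS : ContMDiff 𝓘(ℝ, Cn (n + 1)) 𝓘(ℝ, ℝ) ∞ S := by
    refine contMDiff_fibreScal (Y := X) (Z := M) hΩ hπ.submersion fun p => ?_
    by_cases hp : π p = 0
    · obtain ⟨y, w, rfl⟩ := hF_surj p
      rw [hF_fib] at hp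
      exact .inr ⟨_, 0, hF₀, y, by rw [hp]⟩
    · refine .inl ⟨_, _, hj (Units.mk0 _ hp), ?_⟩
      have : (Units.mk0 _ hp)⁻¹ • p ∈ range ι := by
        rw [hι_range, mem_preimage, hπ.equivariant]
        simp [hp]
      obtain ⟨x, hx⟩ := this
      exact ⟨x, by simp [hx]⟩
  have hSt : ∀ t x, scalarCurvature (ωt t) x = S (expNeg t • ι x) := fun t x => by
    rw [hωt]
    exact scalarCurvature_pullback_eq_fibreScal hΩ hπ.submersion (hj (expNeg t)) x
  have hS₀ : ∀ x, scalarCurvature Ω₀ x = S (F (x, 0)) := fun x => by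
    rw [hΩ₀]
    exact scalarCurvature_pullback_eq_fibreScal hΩ hπ.submersion hF₀ x
  have hj_smooth : ∀ c : ℂˣ, ContMDiff 𝓘(ℝ, Cn n) 𝓘(ℝ, Cn (n + 1)) ∞ (fun x => c • ι x) :=
    fun c x => contMDiffAt_real ((hj c).holo x)
  have hSc : ∀ t, Continuous (scalarCurvature (n := n) (ωt t)) := fun t =>
    (hS.continuous.comp (hj_smooth (expNeg t)).continuous).congr fun x => (hSt t x).symm
  have hfin : ∀ t, IsFiniteMeasure (kahlerVolume (ωt t)) := fun t => by
    obtain ⟨V, -, hV⟩ := exists_volume_cover (Y := X) hΩ hπ.submersion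
      (hπ.proper.isCompact_preimage (isCompact_singleton (x := ((expNeg t : ℂˣ) : ℂ))))
    refine ⟨?_⟩
    rw [hωt]
    exact (hV _ _ (hj (expNeg t)) (hj_inj _) (hj (expNeg t)).fib).trans_lt ENNReal.ofReal_lt_top
  have hcal : ∀ t, modifiedCalabi EG G (ωt 0) (φ t) = calabiEnergy EG G (ωt t) := fun t => by
    rw [modifiedCalabi]
    exact congrArg (calabiEnergy EG G) (funext fun x => (hφω t x).symm)
  have hzero : calabiEnergy EG G Ω₀ = 0 := by
    simp [calabiEnergy, hext]
  refine ⟨fun t => integrable_of_continuous ((continuous_reducedScalarCurvature (hSc t)).pow 2),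
    hcal, ?_, hzero⟩
  -- the extremal potential on the central fibre
  obtain ⟨ξ, p₀, a, hp₀, hSp⟩ : ∃ (ξ : EG) (p₀ : M → ℝ) (a : ℝ),
      IsHamiltonianFor (n := n) EG G (pullback (fun x => F (x, 0)) Ω) ξ p₀ ∧
      ∀ x, S (F (x, 0)) = a + p₀ x := by
    have hx : ∀ x, S (F (x, 0)) = (⨍ y, scalarCurvature Ω₀ y ∂(kahlerVolume Ω₀)) +
        killingProjection EG G Ω₀ (scalarCurvature Ω₀) x := fun x => by
      have := hext x
      rw [reducedScalarCurvature, hS₀] at this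
      linarith
    by_cases h : ∃ p, IsKillingProjection EG G Ω₀ (scalarCurvature Ω₀) p
    · have hk : killingProjection EG G Ω₀ (scalarCurvature Ω₀) = h.choose := by
        rw [killingProjection, dif_pos h]
      obtain ⟨ξ, h1, -⟩ := isKillingPotential_iff.1 h.choose_spec.1
      rw [← hΩ₀]
      exact ⟨ξ, _, _, h1, fun x => by rw [hx, hk]⟩
    · have hk : killingProjection EG G Ω₀ (scalarCurvature Ω₀) = 0 := by
        rw [killingProjection, dif_neg h]
      exact ⟨0, fun _ => 0, _, .const 0, fun x => by rw [hx, hk]; rfl⟩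
  have hactM : ContMDiff (𝓘(ℝ, EG).prod 𝓘(ℝ, Cn n)) 𝓘(ℝ, Cn n) ∞
      (fun q : G × M => q.1 • q.2) := by
    have h1 : ContMDiff (𝓘(ℝ, EG).prod 𝓘(ℝ, Cn n)) 𝓘(ℝ, Cn (n + 1)) ∞
        (fun q : G × M => q.1 • F (q.2, 0)) :=
      hG.action.contMDiff_smul.comp
        (contMDiff_fst.prodMk ((contMDiff_slice F.contMDiff 0).comp contMDiff_snd))
    refine (contMDiff_fst.comp (F.symm.contMDiff.comp h1)).congr fun q => ?_
    simp [← hF_equiv]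
  have hπd : MDifferentiable 𝓘(ℝ, Cn (n + 1)) 𝓘(ℝ, ℂ) π := fun p =>
    (contMDiffAt_real (hπ.holomorphic p)).mdifferentiableAt (by simp)
  obtain ⟨x₀⟩ := (inferInstance : Nonempty M)
  obtain ⟨C₁, hC₁⟩ := exists_lipschitz_of_contMDiff (hS.comp F.contMDiff)
  obtain ⟨C₂, hC₂⟩ := exists_hamiltonian_osc_bound hactM hΩ.smooth F.contMDiff hp₀ x₀
  obtain ⟨V, hV0, hV⟩ := exists_volume_cover (Y := X) hΩ hπ.submersion
    (hπ.proper.isCompact_preimage (isCompact_closedBall (0 : ℂ) 1))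
  refine ⟨(C₁ + C₂) ^ 2 * V, 2, two_pos, fun t ht => ?_⟩
  set s := Real.exp (-t) with hs
  have hs01 : s ∈ Icc (0 : ℝ) 1 := ⟨(Real.exp_pos _).le, Real.exp_le_one_iff.2 (by linarith)⟩
  obtain ⟨f, hf, hham⟩ := hΩ_hamG ξ (s : ℂ)
  have hjs : ∀ x, π (expNeg t • ι x) = (s : ℂ) := fun x => by
    rw [(hj (expNeg t)).fib, expNeg_coe]
  have hcomm := hG.commute
  have hq : IsHamiltonianFor (n := n) EG G (pullback (fun x => expNeg t • ι x) Ω) ξ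
      (fun x => (-1) * f (expNeg t • ι x)) :=
    isHamiltonianFor_comp (hj_smooth (expNeg t)) hπd hjs
      (fun g x => by rw [hι_equiv]; exact (hcomm.smul_comm g _ _).symm) (mdifferentiableAt_orbit hG.action hι hι_equiv)
      hf hham
  have hh : IsHamiltonianFor (n := n) EG G (pullback (fun x => F (x, (s : ℂ))) Ω) ξ
      (fun x => (-1) * f (F (x, (s : ℂ)))) :=
    isHamiltonianFor_comp (contMDiff_slice F.contMDiff s) hπd (fun x => hF_fib x s)
      (fun g x => hF_equiv g x s)
      (fun x => (hactM.comp (contMDiff_id.prodMk contMDiff_const)).mdifferentiable (by simp) 1)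
      hf hham
  set b := a - ((-1) * f (F (x₀, (s : ℂ))) - p₀ x₀)
  have hqb : IsHamiltonianFor (n := n) EG G (ωt t) (ξ + 0)
      (fun x => (-1) * f (expNeg t • ι x) + b) := by
    rw [hωt]
    exact hq.add (.const b)
  have hpt : ∀ x, |scalarCurvature (ωt t) x - ((-1) * f (expNeg t • ι x) + b)| ≤
      (C₁ + C₂) * s := fun x => by
    obtain ⟨y, w, hy⟩ := hF_surj (expNeg t • ι x)
    have hw : w = (s : ℂ) := by rw [← hF_fib y w, hy, hjs]
    subst hw
    rw [hSt, ← hy]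
    have h1 := hC₁ y s hs01
    have h2 := hC₂ s hs01 _ hh y
    rw [Function.comp_apply, Function.comp_apply, hSp y] at h1
    rw [abs_le] at h1 h2 ⊢
    constructor <;> simp only [b] <;> linarith [h1.1, h1.2, h2.1, h2.2]
  have hvol : kahlerVolume (ωt t) univ ≤ ENNReal.ofReal V := by
    rw [hωt]
    refine hV _ _ (hj (expNeg t)) (hj_inj _) fun x => ?_
    rw [mem_preimage, hjs, mem_closedBall_zero_iff, Complex.norm_real, Real.norm_eq_abs,
      abs_of_nonneg hs01.1]
    exact hs01.2
  have := hfin t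
  have hbound : calabiEnergy EG G (ωt t) ≤ ((C₁ + C₂) * s) ^ 2 * V := by
    refine (calabiEnergy_le (hSc t) hqb).trans ?_
    have h1 : ∫ x, (scalarCurvature (ωt t) x - ((-1) * f (expNeg t • ι x) + b)) ^ 2
        ∂(kahlerVolume (ωt t)) ≤ ∫ _, ((C₁ + C₂) * s) ^ 2 ∂(kahlerVolume (ωt t)) :=
      integral_mono (integrable_of_continuous (((hSc t).sub hqb.smooth.continuous).pow 2))
        (integrable_const _) fun x => sq_le_sq' (abs_le.1 (hpt x)).1 (abs_le.1 (hpt x)).2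
    refine h1.trans ?_
    rw [integral_const, smul_eq_mul, mul_comm, measureReal_def]
    exact mul_le_mul_of_nonneg_left (ENNReal.toReal_le_of_le_ofReal hV0 hvol) (sq_nonneg _)
  have hnonneg : 0 ≤ calabiEnergy EG G (ωt t) := integral_nonneg fun x => sq_nonneg _
  rw [hcal, hzero, sub_zero, abs_of_nonneg hnonneg]
  refine hbound.trans_eq ?_
  have : Real.exp (-2 * t) = s ^ 2 := by
    rw [hs, ← Real.exp_nat_mul]
    congr 1
    push_cast
    ring
  rw [this]
  ring
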